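/- In the setting below, assume additionally that the closure of Per_H equals M and that δ ∈ (0, ν) is such that X_δ has finitely many maximal chains that are pairwise disjoint, each accumulating at x. Let p ∈ X_δ, write [p] for the maximal chain of X_δ containing p and S_{[p]} = closure(⋃_{q∈[p]} Ŝ_q). Then for every z ∈ ∂S_{[p]} ∩ B_δ(x) and every ε' > 0 there exists an open neighborhood V of z such that for all q, r ∈ V ∩ [p]: U_q ∩ S_r ∩ B_{ε'}(z) ∩ S_{[p]} ≠ ∅ and U_q ∩ ∂S_{[p]} ∩ B_{ε'}(z) ≠ ∅, where ∂ denotes the topological frontier in M. -/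

import Mathlib

open Metric Set

variable {M : Type*} [MetricSpace M]

/-- Iterates of a homeomorphism, indexed by `ℤ`. -/
def iterZ (f : M ≃ₜ M) (k : ℤ) (x : M) : M := (f.toEquiv ^ k) x

/-- `f` is expansive with expansivity constant `α`. -/
def IsExpansive (f : M ≃ₜ M) (α : ℝ) : Prop :=
  ∀ x y : M, x ≠ y → ∃ k : ℤ, α < dist (iterZ f k x) (iterZ f k y)

/-- Stable set of `x`. -/
def Ws (f : M ≃ₜ M) (x : M) : Set M :=
  {y | Filter.Tendsto (fun k : ℤ => dist (iterZ f k x) (iterZ f k y)) Filter.atTop (nhds 0)}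

/-- Unstable set of `x`. -/
def Wu (f : M ≃ₜ M) (x : M) : Set M :=
  {y | Filter.Tendsto (fun k : ℤ => dist (iterZ f k x) (iterZ f k y)) Filter.atBot (nhds 0)}

/-- Local (`ε`-local) stable set of `x`. -/
def WsLoc (f : M ≃ₜ M) (ε : ℝ) (x : M) : Set M :=
  {y | ∀ k : ℤ, 0 ≤ k → dist (iterZ f k x) (iterZ f k y) ≤ ε}

/-- Local (`ε`-local) unstable set of `x`. -/
def WuLoc (f : M ≃ₜ M) (ε : ℝ) (x : M) : Set M :=
  {y | ∀ k : ℤ, k ≤ 0 → dist (iterZ f k x) (iterZ f k y) ≤ ε}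

/-- The model space `ℝ^r × ℝ^{n-r}`. -/
abbrev ModelSp (n r : ℕ) := (Fin r → ℝ) × (Fin (n - r) → ℝ)

/-- The model hyperbolic linear map `L(a,b) = (a/2, 2b)`. -/
noncomputable def modelL (n r : ℕ) : ModelSp n r → ModelSp n r :=
  fun q => (fun i => q.1 i / 2, fun i => 2 * q.2 i)

/-- Topologically hyperbolic periodic points of index `r` (`Per_H^r`). -/
def PerHr (f : M ≃ₜ M) (n r : ℕ) : Set M :=
  {p | ∃ l : ℕ, 1 ≤ l ∧ (f.toEquiv ^ l) p = p ∧
    ∃ (U : Set M) (V : Set (ModelSp n r)) (h : U ≃ₜ V),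
      IsOpen U ∧ IsOpen V ∧ (0 : ModelSp n r) ∈ V ∧
      ∃ hp : p ∈ U, ((h ⟨p, hp⟩ : V) : ModelSp n r) = 0 ∧
        ∀ z : M, ∀ hz : z ∈ U, ∀ hz' : (f.toEquiv ^ l) z ∈ U,
          ((h ⟨(f.toEquiv ^ l) z, hz'⟩ : V) : ModelSp n r) = modelL n r (h ⟨z, hz⟩)}

/-- All topologically hyperbolic periodic points (`Per_H`). -/
def PerH (f : M ≃ₜ M) (n : ℕ) : Set M := ⋃ r ∈ Finset.range (n + 1), PerHr f n r

/-- `p` admits a local product structure. -/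
def AdmitsLPS (f : M ≃ₜ M) (n : ℕ) (p : M) : Prop :=
  ∃ (k : ℕ) (h : (Fin k → ℝ) × (Fin (n - k) → ℝ) → M) (ε : ℝ),
    0 < ε ∧ Topology.IsEmbedding h ∧ p ∈ Set.range h ∧
    ∀ x : Fin k → ℝ, ∀ y : Fin (n - k) → ℝ,
      h '' ({x} ×ˢ univ) = WsLoc f ε (h (x, y)) ∩ Set.range h ∧
      h '' (univ ×ˢ {y}) = WuLoc f ε (h (x, y)) ∩ Set.range h

/-- `D` has exactly two connected components, namely `V₁` and `V₂`. -/
def TwoComponents {M : Type*} [TopologicalSpace M] (D V₁ V₂ : Set M) : Prop :=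
  V₁ ≠ V₂ ∧
  (∀ y ∈ D, connectedComponentIn D y = V₁ ∨ connectedComponentIn D y = V₂) ∧
  (∃ y ∈ D, connectedComponentIn D y = V₁) ∧ (∃ y ∈ D, connectedComponentIn D y = V₂)

variable {M : Type*} [MetricSpace M]

/-- `S_p = cc_p(W^s(p) ∩ B_ν(x))`. -/
def SpSet (f : M ≃ₜ M) (x : M) (ν : ℝ) (p : M) : Set M :=
  connectedComponentIn (Ws f p ∩ Metric.ball x ν) p

/-- `U_p = cc_p(W^u(p) ∩ B_ν(x))`. -/
def UpSet (f : M ≃ₜ M) (x : M) (ν : ℝ) (p : M) : Set M :=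
  connectedComponentIn (Wu f p ∩ Metric.ball x ν) p

/-- `Ŝ_p = B_ν(x) \ cc_x(B_ν(x) \ S_p)`. -/
def ShatSet (f : M ≃ₜ M) (x : M) (ν : ℝ) (p : M) : Set M :=
  Metric.ball x ν \ connectedComponentIn (Metric.ball x ν \ SpSet f x ν p) x

/-- `X_δ = Per_H^{n-1} ∩ B_δ(x)`. -/
def Xdelta (f : M ≃ₜ M) (n : ℕ) (x : M) (δ : ℝ) : Set M :=
  PerHr f n (n - 1) ∩ Metric.ball x δ

/-- `C` is a chain of `(X_δ, ≤)`, where `p ≤ q ↔ Ŝ_p ⊆ Ŝ_q`. -/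
def IsChainIn (f : M ≃ₜ M) (n : ℕ) (x : M) (ν δ : ℝ) (C : Set M) : Prop :=
  C ⊆ Xdelta f n x δ ∧
  ∀ p ∈ C, ∀ q ∈ C, ShatSet f x ν p ⊆ ShatSet f x ν q ∨ ShatSet f x ν q ⊆ ShatSet f x ν p

/-- `C` is a maximal chain of `(X_δ, ≤)`. -/
def IsMaxChainIn (f : M ≃ₜ M) (n : ℕ) (x : M) (ν δ : ℝ) (C : Set M) : Prop :=
  IsChainIn f n x ν δ C ∧ ∀ C' : Set M, IsChainIn f n x ν δ C' → C ⊆ C' → C' = C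

/-!
Each set `Ŝ_q` is what the plaque `S_q` cuts off from `x` inside `B_ν(x)`. Because the chain
accumulates at `x` and distinct plaques are disjoint, every `Ŝ_t` lies in the interior of a larger
`Ŝ_q`; so the union `O` of the chain is open and points of `∂S_{[p]}` lie outside `O`.

Let `z` be such a point, a limit of the chain, and choose a small sphere around `z`. A point of
`closure O` outside `O` is a limit of plaques `S_q` with `q → z`, hence lies in `W^s_α(z)`. By
expansivity it cannot also lie in `W^u_α(z)` and on the sphere, so on the sphere
`W^u_α(z) ∩ closure O` is contained in `O`, and by compactness in one `Ŝ_t`. The same then holds for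
`U_q` with `q` close to `z`, and `Ŝ_t ⊆ Ŝ_r` for `r` close to `z`: on the sphere, `U_q ∩ closure O`
lies in every such `Ŝ_r`.

The two branches of `U_q` leave `q` on opposite sides of `S_q`, are disjoint from `S_q` by
expansivity, and reach the sphere, the one in `Ŝ_q` and the other outside. Their first ends are
therefore in `Ŝ_r` and their other ends outside `closure O`, so the connected set they form with `q`
meets both `S_r` and `∂S_{[p]}`.
-/

open Filter Topology

section Components

variable {X : Type*} [TopologicalSpace X] {B D F H S Y : Set X} {a b x y : X}

lemma connectedComponentIn_eq_of_mem_of_mem (ha : y ∈ connectedComponentIn F a)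
    (hb : y ∈ connectedComponentIn F b) :
    connectedComponentIn F a = connectedComponentIn F b :=
  (connectedComponentIn_eq ha).trans (connectedComponentIn_eq hb).symm

lemma subset_connectedComponentIn_of_mem (hH : IsPreconnected H) (hF : H ⊆ F) (hy : y ∈ H)
    (hya : y ∈ connectedComponentIn F a) : H ⊆ connectedComponentIn F a := by
  rw [connectedComponentIn_eq hya]
  exact hH.subset_connectedComponentIn hy hF

lemma inter_frontier_nonempty_of_isPreconnected (hY : IsPreconnected Y)
    (hin : (Y ∩ S).Nonempty) (hout : (Y \ S).Nonempty) : (Y ∩ frontier S).Nonempty := by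
  by_contra hempty
  have hcover : Y ⊆ interior S ∪ (closure S)ᶜ := fun y hy ↦ by
    by_contra hfr
    rw [mem_union, mem_compl_iff, not_or, not_not] at hfr
    exact hempty ⟨y, hy, hfr.2, hfr.1⟩
  obtain ⟨u, hu, huS⟩ := hin
  obtain ⟨v, hv, hvS⟩ := hout
  have hu' : u ∈ interior S := (hcover hu).resolve_right fun h ↦ h (subset_closure huS)
  have hv' : v ∈ (closure S)ᶜ := (hcover hv).resolve_left fun h ↦ hvS (interior_subset h)
  obtain ⟨w, -, hw, hw'⟩ :=
    hY _ _ isOpen_interior isClosed_closure.isOpen_compl hcover ⟨u, hu, hu'⟩ ⟨v, hv, hv'⟩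
  exact hw' (subset_closure (interior_subset hw))

lemma frontier_connectedComponentIn_subset_compl [LocallyConnectedSpace X] (hF : IsOpen F) :
    frontier (connectedComponentIn F a) ⊆ Fᶜ := by
  intro w hw hwF
  have hopen : IsOpen (connectedComponentIn F a) := hF.connectedComponentIn
  rw [hopen.frontier_eq] at hw
  have hww := mem_connectedComponentIn hwF
  obtain ⟨u, huw, hua⟩ := mem_closure_iff.1 hw.1 _ (hF.connectedComponentIn (x := w)) hww
  exact hw.2 (connectedComponentIn_eq_of_mem_of_mem huw hua ▸ hww)

namespace TwoComponents

variable {V₁ V₂ : Set X}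

lemma exists_connectedComponentIn_ne (h : TwoComponents D V₁ V₂) (x : X) :
    ∃ y ∈ D, connectedComponentIn D x ≠ connectedComponentIn D y := by
  obtain ⟨hne, -, ⟨y₁, hy₁, rfl⟩, ⟨y₂, hy₂, rfl⟩⟩ := h
  by_cases hx : connectedComponentIn D x = connectedComponentIn D y₁
  · exact ⟨y₂, hy₂, hx ▸ hne⟩
  · exact ⟨y₁, hy₁, hx⟩

lemma connectedComponentIn_eq_of_ne (h : TwoComponents D V₁ V₂) (hx : x ∈ D) (hy : y ∈ D)
    (ha : a ∈ D) (hax : connectedComponentIn D a ≠ connectedComponentIn D x)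
    (hay : connectedComponentIn D a ≠ connectedComponentIn D y) :
    connectedComponentIn D x = connectedComponentIn D y := by
  have hD := h.2.1
  rcases hD x hx with h₁ | h₁ <;> rcases hD y hy with h₂ | h₂ <;> rcases hD a ha with h₃ | h₃ <;>
    simp_all

end TwoComponents

/-- What `S` cuts off from `x` in `B`, with `S ∩ B` included; for `B = B_ν(x)` and `S = S_p` this is
`Ŝ_p`. If `x ∉ B \ S`, the component is empty and the filling is all of `B`. -/
def filling (B S : Set X) (x : X) : Set X := B \ connectedComponentIn (B \ S) x

lemma subset_filling (hS : S ⊆ B) : S ⊆ filling B S x :=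
  fun _ hy ↦ ⟨hS hy, fun h ↦ (connectedComponentIn_subset _ _ h).2 hy⟩

lemma filling_eq_of_mem (hx : x ∈ S) : filling B S x = B := by
  rw [filling, connectedComponentIn_eq_empty fun h ↦ h.2 hx, sdiff_empty]

lemma notMem_filling_iff (hy : y ∈ B) :
    y ∉ filling B S x ↔ y ∈ connectedComponentIn (B \ S) x := by
  simp [filling, hy]

lemma notMem_filling_self (hx : x ∈ B \ S) : x ∉ filling B S x :=
  fun h ↦ h.2 (mem_connectedComponentIn hx)

lemma disjoint_filling_of_mem (hY : IsPreconnected Y) (hYB : Y ⊆ B \ S) (hy : y ∈ Y)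
    (hyS : y ∉ filling B S x) : Disjoint (filling B S x) Y :=
  disjoint_right.2 fun _ hu hfill ↦ hfill.2 <|
    subset_connectedComponentIn_of_mem hY hYB hy ((notMem_filling_iff (hYB hy).1).1 hyS) hu

lemma subset_filling_of_mem (hY : IsPreconnected Y) (hYB : Y ⊆ B \ S) (hy : y ∈ Y)
    (hyS : y ∈ filling B S x) : Y ⊆ filling B S x := fun _ hu ↦ by
  by_contra hufill
  exact disjoint_left.1 (disjoint_filling_of_mem hY hYB hu hufill) hyS hy

lemma inter_nonempty_of_filling (hY : IsPreconnected Y) (hYB : Y ⊆ B)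
    (hin : (Y ∩ filling B S x).Nonempty) (hout : (Y \ filling B S x).Nonempty) :
    (Y ∩ S).Nonempty := by
  by_contra hempty
  obtain ⟨u, hu, hufill⟩ := hin
  obtain ⟨v, hv, hvfill⟩ := hout
  have hYS : Y ⊆ B \ S := fun y hy ↦ ⟨hYB hy, fun hyS ↦ hempty ⟨y, hy, hyS⟩⟩
  exact disjoint_left.1 (disjoint_filling_of_mem hY hYS hv hvfill) hufill hu

lemma eventually_notMem_filling [LocallyConnectedSpace X] (hS : IsOpen (B \ S)) (hyB : y ∈ B)
    (hy : y ∉ filling B S x) : ∀ᶠ u in 𝓝 y, u ∉ filling B S x :=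
  (hS.connectedComponentIn.eventually_mem ((notMem_filling_iff hyB).1 hy)).mono
    fun _ h h' ↦ h'.2 h

lemma filling_diff_subset_interior [LocallyConnectedSpace X] (hS : IsOpen (B \ S)) :
    filling B S x \ S ⊆ interior (filling B S x) := by
  rintro y ⟨hy, hyS⟩
  refine mem_interior.2 ⟨connectedComponentIn (B \ S) y, fun u hu ↦ ?_,
    hS.connectedComponentIn, mem_connectedComponentIn ⟨hy.1, hyS⟩⟩
  refine ⟨(connectedComponentIn_subset _ _ hu).1, fun hux ↦ hy.2 ?_⟩
  rw [connectedComponentIn_eq_of_mem_of_mem hux hu]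
  exact mem_connectedComponentIn ⟨hy.1, hyS⟩

lemma connectedComponentIn_inter_filling_subset {V₁ V₂ : Set X} (h : TwoComponents (B \ S) V₁ V₂)
    (hx : x ∈ B \ S) (hS : S ⊆ connectedComponentIn B x) (hB : ¬IsPreconnected B) :
    connectedComponentIn B x ∩ filling B S x ⊆ S := by
  rintro w ⟨hwx, hw⟩
  by_contra hwS
  obtain ⟨y, hyB, hyx⟩ : ∃ y ∈ B, y ∉ connectedComponentIn B x := by
    by_contra! hall
    exact hB ((connectedComponentIn_subset B x).antisymm hall ▸ isPreconnected_connectedComponentIn)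
  have hwD : w ∈ B \ S := ⟨hw.1, hwS⟩
  have hyD : y ∈ B \ S := ⟨hyB, fun hyS ↦ hyx (hS hyS)⟩
  have ne_of_mem : ∀ {u}, u ∈ connectedComponentIn B x →
      connectedComponentIn (B \ S) y ≠ connectedComponentIn (B \ S) u := by
    intro u hux heq
    have hyu : y ∈ connectedComponentIn B u :=
      connectedComponentIn_mono u sdiff_subset (heq ▸ mem_connectedComponentIn hyD)
    exact hyx (connectedComponentIn_eq hux ▸ hyu)
  have hxw := h.connectedComponentIn_eq_of_ne hx hwD hyD
    (ne_of_mem (mem_connectedComponentIn hx.1)) (ne_of_mem hwx)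
  exact hw.2 (hxw ▸ mem_connectedComponentIn hwD)

end Components

section TwoSided

variable {X : Type*} [TopologicalSpace X] {B D S O H₁ H₂ : Set X} {w x y : X}

/-- `O` is an open set in which `S ⊆ B` looks like a separating hypersurface: outside `S` it is
covered by two connected pieces of `B \ S`, both accumulating at every point of `O ∩ S`. -/
structure IsTwoSidedNhd (B S O H₁ H₂ : Set X) : Prop where
  isOpen : IsOpen O
  isPreconnected_left : IsPreconnected H₁
  isPreconnected_right : IsPreconnected H₂
  left_subset : H₁ ⊆ B \ S
  right_subset : H₂ ⊆ B \ S
  subset_union : O ⊆ S ∪ (H₁ ∪ H₂)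
  inter_subset_closure_left : O ∩ S ⊆ closure H₁
  inter_subset_closure_right : O ∩ S ⊆ closure H₂

namespace IsTwoSidedNhd

lemma left_or_right_subset (h : IsTwoSidedNhd B S O H₁ H₂)
    (hO : (O ∩ connectedComponentIn (B \ S) y).Nonempty) :
    H₁ ⊆ connectedComponentIn (B \ S) y ∨ H₂ ⊆ connectedComponentIn (B \ S) y := by
  obtain ⟨u, huO, huy⟩ := hO
  rcases h.subset_union huO with hu | hu | hu
  · exact absurd hu (connectedComponentIn_subset _ _ huy).2
  · exact .inl (subset_connectedComponentIn_of_mem h.isPreconnected_left h.left_subset hu huy)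
  · exact .inr (subset_connectedComponentIn_of_mem h.isPreconnected_right h.right_subset hu huy)

lemma inter_subset_closure (h : IsTwoSidedNhd B S O H₁ H₂)
    (hO : (O ∩ connectedComponentIn (B \ S) y).Nonempty) :
    O ∩ S ⊆ closure (connectedComponentIn (B \ S) y) := by
  rcases h.left_or_right_subset hO with hH | hH
  · exact h.inter_subset_closure_left.trans (closure_mono hH)
  · exact h.inter_subset_closure_right.trans (closure_mono hH)

end IsTwoSidedNhd

variable [LocallyConnectedSpace X]

lemma subset_closure_connectedComponentIn_diff (hB : IsPreconnected B) (hSB : S ⊆ B)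
    (hS : IsPreconnected S) (hopen : IsOpen (B \ S))
    (hflat : ∀ w ∈ S, ∃ O H₁ H₂, w ∈ O ∧ IsTwoSidedNhd B S O H₁ H₂) (hy : y ∈ B \ S) :
    S ⊆ closure (connectedComponentIn (B \ S) y) := by
  set V := connectedComponentIn (B \ S) y with hV
  rcases S.eq_empty_or_nonempty with rfl | ⟨s, hs⟩
  · exact empty_subset _
  obtain ⟨w, hwB, hwV⟩ : (B ∩ frontier V).Nonempty :=
    inter_frontier_nonempty_of_isPreconnected hB ⟨y, hy.1, mem_connectedComponentIn hy⟩
      ⟨s, hSB hs, fun h ↦ (connectedComponentIn_subset _ _ h).2 hs⟩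
  have hwS : w ∈ S := by
    by_contra h
    exact frontier_connectedComponentIn_subset_compl hopen hwV ⟨hwB, h⟩
  have hloc : ∀ s ∈ S ∩ closure V, s ∈ interior (closure V ∪ Sᶜ) := by
    rintro s ⟨hs, hsV⟩
    obtain ⟨O, H₁, H₂, hsO, hO⟩ := hflat s hs
    refine mem_interior.2 ⟨O, fun u hu ↦ ?_, hO.isOpen, hsO⟩
    by_cases huS : u ∈ S
    · exact .inl (hO.inter_subset_closure (mem_closure_iff.1 hsV O hO.isOpen hsO) ⟨hu, huS⟩)
    · exact .inr huS
  intro t ht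
  by_contra htV
  obtain ⟨u, huS, hu, huV⟩ := hS _ (closure V)ᶜ isOpen_interior isClosed_closure.isOpen_compl
    (fun s hs ↦ (em (s ∈ closure V)).imp (fun h ↦ hloc s ⟨hs, h⟩) id)
    ⟨w, hwS, hloc w ⟨hwS, frontier_subset_closure hwV⟩⟩ ⟨t, ht, htV⟩
  exact (interior_subset hu).elim huV fun h ↦ h huS

lemma IsTwoSidedNhd.separated (h : IsTwoSidedNhd B S O H₁ H₂) (hB : IsPreconnected B)
    (hSB : S ⊆ B) (hS : IsPreconnected S) (hopen : IsOpen (B \ S))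
    (hflat : ∀ w ∈ S, ∃ O H₁ H₂, w ∈ O ∧ IsTwoSidedNhd B S O H₁ H₂) (hx : x ∈ B \ S)
    (hy : y ∈ B \ S) (hxy : connectedComponentIn (B \ S) x ≠ connectedComponentIn (B \ S) y)
    (hwO : w ∈ O) (hwS : w ∈ S) :
    (Disjoint H₁ (filling B S x) ∧ H₂ ⊆ filling B S x) ∨
      (Disjoint H₂ (filling B S x) ∧ H₁ ⊆ filling B S x) := by
  have meets : ∀ {u}, u ∈ B \ S → (O ∩ connectedComponentIn (B \ S) u).Nonempty := fun hu ↦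
    mem_closure_iff.1 (subset_closure_connectedComponentIn_diff hB hSB hS hopen hflat hu hwS)
      O h.isOpen hwO
  have outside : ∀ {H}, H ⊆ connectedComponentIn (B \ S) x → Disjoint H (filling B S x) :=
    fun hH ↦ disjoint_left.2 fun _ hu hfill ↦ hfill.2 (hH hu)
  have inside : ∀ {H}, H ⊆ connectedComponentIn (B \ S) y → H ⊆ filling B S x := fun hH u hu ↦
    ⟨(connectedComponentIn_subset _ _ (hH hu)).1,
      fun hux ↦ hxy (connectedComponentIn_eq_of_mem_of_mem hux (hH hu))⟩
  have not_both : ∀ {H : Set X}, w ∈ closure H → H ⊆ connectedComponentIn (B \ S) x →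
      ¬H ⊆ connectedComponentIn (B \ S) y := fun hw hHx hHy ↦ by
    obtain ⟨u, hu⟩ := closure_nonempty_iff.1 ⟨w, hw⟩
    exact hxy (connectedComponentIn_eq_of_mem_of_mem (hHx hu) (hHy hu))
  have hw₁ := h.inter_subset_closure_left ⟨hwO, hwS⟩
  have hw₂ := h.inter_subset_closure_right ⟨hwO, hwS⟩
  rcases h.left_or_right_subset (meets hx) with h₁ | h₁ <;>
    rcases h.left_or_right_subset (meets hy) with h₂ | h₂
  · exact absurd h₂ (not_both hw₁ h₁)
  · exact .inl ⟨outside h₁, inside h₂⟩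
  · exact .inr ⟨outside h₁, inside h₂⟩
  · exact absurd h₂ (not_both hw₂ h₁)

end TwoSided

lemma exists_first_hitting {g : ℝ → ℝ} {a b η : ℝ} (hab : a ≤ b) (hg : ContinuousOn g (Icc a b))
    (ha : g a < η) (hb : η ≤ g b) : ∃ c ∈ Ioc a b, g c = η ∧ ∀ s ∈ Icc a c, g s ≤ η := by
  have hcompact : IsCompact (Icc a b ∩ g ⁻¹' {η}) :=
    isCompact_Icc.of_isClosed_subset
      (hg.preimage_isClosed_of_isClosed isClosed_Icc isClosed_singleton) inter_subset_left
  have hnonempty : (Icc a b ∩ g ⁻¹' {η}).Nonempty := intermediate_value_Icc hab hg ⟨ha.le, hb⟩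
  obtain ⟨c, ⟨hc, rfl⟩, hcmin⟩ := hcompact.exists_isLeast hnonempty
  refine ⟨c, ⟨hc.1.lt_of_ne (by rintro rfl; exact ha.false), hc.2⟩, rfl, fun s hs ↦ ?_⟩
  by_contra! hlt
  have hsb := hs.2.trans hc.2
  obtain ⟨t, ht, htη⟩ := intermediate_value_Icc hs.1 (hg.mono (Icc_subset_Icc_right hsb))
    ⟨ha.le, hlt.le⟩
  have hct : c ≤ t := hcmin ⟨⟨ht.1, ht.2.trans hsb⟩, htη⟩
  rw [← hs.2.antisymm (hct.trans ht.2)] at hlt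
  exact hlt.false

section Iterates

variable {f : M ≃ₜ M} {x y : M}

lemma iterZ_eq_zpow (f : M ≃ₜ M) (k : ℤ) : iterZ f k = ⇑(f ^ k) :=
  congrArg DFunLike.coe
    (map_zpow (MonoidHom.mk' (Homeomorph.toEquiv (X := M) (Y := M)) fun _ _ ↦ rfl) f k).symm

lemma continuous_iterZ (f : M ≃ₜ M) (k : ℤ) : Continuous (iterZ f k) :=
  iterZ_eq_zpow f k ▸ (f ^ k).continuous

@[simp]
lemma iterZ_zero (f : M ≃ₜ M) (x : M) : iterZ f 0 x = x := by
  simp [iterZ]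

lemma iterZ_natCast (f : M ≃ₜ M) (l : ℕ) (x : M) : iterZ f l x = (f.toEquiv ^ l) x := by
  simp [iterZ]

lemma iterZ_add (f : M ≃ₜ M) (a b : ℤ) (x : M) :
    iterZ f (a + b) x = iterZ f a (iterZ f b x) := by
  simp [iterZ, zpow_add]

@[simp]
lemma iterZ_neg_iterZ (f : M ≃ₜ M) (k : ℤ) (x : M) : iterZ f (-k) (iterZ f k x) = x := by
  rw [← iterZ_add, neg_add_cancel, iterZ_zero]

@[simp]
lemma iterZ_iterZ_neg (f : M ≃ₜ M) (k : ℤ) (x : M) : iterZ f k (iterZ f (-k) x) = x := by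
  rw [← iterZ_add, add_neg_cancel, iterZ_zero]

lemma iterZ_neg_eq_iff {k : ℤ} : iterZ f (-k) x = y ↔ iterZ f k y = x :=
  ⟨fun h ↦ by rw [← h, iterZ_iterZ_neg], fun h ↦ by rw [← h, iterZ_neg_iterZ]⟩

lemma iterZ_mul_succ (f : M ≃ₜ M) (l : ℤ) (k : ℕ) (x : M) :
    iterZ f (l * (k + 1 : ℕ)) x = iterZ f l (iterZ f (l * k) x) := by
  rw [← iterZ_add]
  congr 1
  push_cast
  ring

lemma iterZ_symm (f : M ≃ₜ M) (k : ℤ) (x : M) : iterZ f.symm k x = iterZ f (-k) x := by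
  simp [iterZ, show f.symm.toEquiv = f.toEquiv⁻¹ from rfl]

lemma iterZ_neg_eq_self {k : ℤ} (h : iterZ f k x = x) : iterZ f (-k) x = x :=
  iterZ_neg_eq_iff.2 h

lemma iterZ_mul_eq_self {l : ℤ} (h : iterZ f l x = x) (k : ℕ) : iterZ f (l * k) x = x := by
  induction k with
  | zero => simp
  | succ i ih => rw [iterZ_mul_succ, ih, h]

lemma IsExpansive.symm {α : ℝ} (h : IsExpansive f α) : IsExpansive f.symm α := fun x y hxy ↦ by
  obtain ⟨k, hk⟩ := h x y hxy
  exact ⟨-k, by simpa only [iterZ_symm, neg_neg] using hk⟩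

lemma Wu_eq_Ws_symm (f : M ≃ₜ M) (x : M) : Wu f x = Ws f.symm x := by
  ext y
  simp only [Wu, Ws, mem_ofPred_eq, iterZ_symm]
  exact ⟨fun h ↦ h.comp tendsto_neg_atTop_atBot,
    fun h ↦ by simpa [Function.comp_def] using h.comp tendsto_neg_atBot_atTop⟩

lemma WuLoc_eq_WsLoc_symm (f : M ≃ₜ M) (ε : ℝ) (x : M) : WuLoc f ε x = WsLoc f.symm ε x := by
  ext y
  simp only [WuLoc, WsLoc, mem_ofPred_eq, iterZ_symm]
  exact ⟨fun h k hk ↦ h _ (by omega), fun h k hk ↦ by simpa using h (-k) (by omega)⟩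

end Iterates

section StableSets

variable {f : M ≃ₜ M} {α ε : ℝ} {x y : M}

lemma WsLoc_mono (f : M ≃ₜ M) {a b : ℝ} (hab : a ≤ b) (x : M) : WsLoc f a x ⊆ WsLoc f b x :=
  fun _ hy k hk ↦ (hy k hk).trans hab

lemma WuLoc_mono (f : M ≃ₜ M) {a b : ℝ} (hab : a ≤ b) (x : M) : WuLoc f a x ⊆ WuLoc f b x :=
  fun _ hy k hk ↦ (hy k hk).trans hab

lemma mem_Ws_self (f : M ≃ₜ M) (x : M) : x ∈ Ws f x := by
  simp [Ws]

lemma mem_Wu_self (f : M ≃ₜ M) (x : M) : x ∈ Wu f x := by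
  simp [Wu]

lemma Ws_subset_of_mem (h : y ∈ Ws f x) : Ws f y ⊆ Ws f x := fun w hw ↦ by
  have hsum := Tendsto.add h hw
  rw [add_zero] at hsum
  exact squeeze_zero (fun _ ↦ dist_nonneg) (fun _ ↦ dist_triangle _ _ _) hsum

lemma Ws_eq_of_mem (h : y ∈ Ws f x) : Ws f y = Ws f x :=
  (Ws_subset_of_mem h).antisymm <| Ws_subset_of_mem <| by
    simpa only [Ws, mem_ofPred_eq, dist_comm] using h

lemma iterZ_mem_Ws (j : ℤ) (h : y ∈ Ws f x) : iterZ f j y ∈ Ws f (iterZ f j x) :=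
  (Tendsto.comp h (tendsto_atTop_add_const_right _ j tendsto_id)).congr fun k ↦ by
    simp only [Function.comp_apply, id_eq, iterZ_add]

lemma iterZ_mem_Wu (j : ℤ) (h : y ∈ Wu f x) : iterZ f j y ∈ Wu f (iterZ f j x) := by
  rw [Wu_eq_Ws_symm] at h ⊢
  simpa only [iterZ_symm, neg_neg] using iterZ_mem_Ws (-j) h

lemma iterZ_mem_WsLoc {j : ℤ} (hj : 0 ≤ j) (h : y ∈ WsLoc f ε x) :
    iterZ f j y ∈ WsLoc f ε (iterZ f j x) := fun k hk ↦ by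
  rw [← iterZ_add, ← iterZ_add]
  exact h _ (by omega)

lemma isClosed_setOf_mem_WsLoc (f : M ≃ₜ M) (ε : ℝ) :
    IsClosed {p : M × M | p.2 ∈ WsLoc f ε p.1} := by
  have heq : {p : M × M | p.2 ∈ WsLoc f ε p.1} =
      ⋂ (k : ℤ) (_ : 0 ≤ k), {p | dist (iterZ f k p.1) (iterZ f k p.2) ≤ ε} := by
    ext p
    simp [WsLoc]
  rw [heq]
  exact isClosed_iInter fun k ↦ isClosed_iInter fun _ ↦
    isClosed_le (((continuous_iterZ f k).comp continuous_fst).dist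
      ((continuous_iterZ f k).comp continuous_snd)) continuous_const

lemma isClosed_setOf_mem_WuLoc (f : M ≃ₜ M) (ε : ℝ) :
    IsClosed {p : M × M | p.2 ∈ WuLoc f ε p.1} := by
  simpa only [WuLoc_eq_WsLoc_symm] using isClosed_setOf_mem_WsLoc f.symm ε

lemma isClosed_WsLoc (f : M ≃ₜ M) (ε : ℝ) (x : M) : IsClosed (WsLoc f ε x) :=
  (isClosed_setOf_mem_WsLoc f ε).preimage (Continuous.prodMk_right x)

lemma tendsto_const_mul_natCast_atTop {l : ℕ} (hl : 1 ≤ l) :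
    Tendsto (fun k : ℕ ↦ (l : ℤ) * k) atTop atTop :=
  tendsto_natCast_atTop_atTop.const_mul_atTop' (mod_cast hl)

lemma tendsto_iterZ_mul_of_mem_Ws {l : ℕ} (hl : 1 ≤ l) (hx : iterZ f l x = x) (h : y ∈ Ws f x) :
    Tendsto (fun k : ℕ ↦ iterZ f (l * k) y) atTop (𝓝 x) := by
  rw [tendsto_iff_dist_tendsto_zero]
  refine (Tendsto.comp h (tendsto_const_mul_natCast_atTop hl)).congr fun k ↦ ?_
  rw [Function.comp_apply, iterZ_mul_eq_self hx k, dist_comm]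

lemma mem_Ws_of_tendsto_iterZ_mul {l : ℕ} (hl : 1 ≤ l) (hx : iterZ f l x = x)
    (h : Tendsto (fun k : ℕ ↦ iterZ f (l * k) y) atTop (𝓝 x)) : y ∈ Ws f x := by
  have hl' : (0 : ℤ) < l := mod_cast hl
  refine Metric.tendsto_atTop'.2 fun η hη ↦ ?_
  have hnear : ∀ᶠ u in 𝓝 x, ∀ j ∈ Finset.range l, dist (iterZ f j x) (iterZ f j u) < η := by
    refine (eventually_all_finset _).2 fun j _ ↦ ?_
    have hcont : Continuous fun u ↦ dist (iterZ f j x) (iterZ f j u) :=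
      continuous_const.dist (continuous_iterZ f j)
    exact hcont.continuousAt.eventually_lt continuousAt_const (by simpa using hη)
  obtain ⟨K, hK⟩ := eventually_atTop.1 (h.eventually hnear)
  refine ⟨l * K, fun m hm ↦ ?_⟩
  obtain ⟨j, hj⟩ := Int.eq_ofNat_of_zero_le (Int.emod_nonneg m hl'.ne')
  obtain ⟨k, hk⟩ := Int.eq_ofNat_of_zero_le
    ((Int.natCast_nonneg K).trans ((Int.le_ediv_iff_mul_le hl').2 (by linarith)) : 0 ≤ m / l)
  have hm' : m = j + l * k := by rw [← hk, ← hj, Int.emod_add_mul_ediv]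
  have hjl : j < l := by have := Int.emod_lt_of_pos m hl'; omega
  have hKk : K ≤ k := by
    have : (K : ℤ) ≤ m / l := (Int.le_ediv_iff_mul_le hl').2 (by linarith)
    omega
  rw [hm', iterZ_add, iterZ_add, iterZ_mul_eq_self hx k, Real.dist_0_eq_abs, abs_dist]
  exact hK k hKk j (Finset.mem_range.2 hjl)

namespace IsExpansive

lemma eq_of_mem_WsLoc_of_mem_WuLoc (hf : IsExpansive f α) (hs : y ∈ WsLoc f α x)
    (hu : y ∈ WuLoc f α x) : y = x := by
  by_contra hne
  obtain ⟨k, hk⟩ := hf x y (Ne.symm hne)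
  exact hk.not_ge ((le_total 0 k).elim (hs k) (hu k))

lemma eq_of_forall_iterZ_mul_mem_WuLoc (hf : IsExpansive f α) {l : ℕ} (hl : 1 ≤ l)
    (hx : iterZ f l x = x) (h : ∀ k : ℕ, iterZ f (l * k) y ∈ WuLoc f α x) : y = x := by
  by_contra hne
  obtain ⟨m, hm⟩ := hf x y (Ne.symm hne)
  have hml : m ≤ l * m.toNat :=
    (Int.self_le_toNat m).trans (mod_cast Nat.le_mul_of_pos_left _ hl)
  have hle := h m.toNat (m - l * m.toNat) (by linarith)
  rw [← iterZ_add, sub_add_cancel, sub_eq_add_neg, iterZ_add,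
    iterZ_neg_eq_self (iterZ_mul_eq_self hx _)] at hle
  exact hm.not_ge hle

variable [CompactSpace M]

lemma exists_finset_forall_dist_lt (hf : IsExpansive f α) {η : ℝ} (hη : 0 < η) :
    ∃ s : Finset ℤ, ∀ u v : M, (∀ k ∈ s, dist (iterZ f k u) (iterZ f k v) ≤ α) →
      dist u v < η := by
  have hclosed : ∀ k : ℤ, IsClosed {p : M × M | dist (iterZ f k p.1) (iterZ f k p.2) ≤ α} :=
    fun k ↦ isClosed_le (((continuous_iterZ f k).comp continuous_fst).dist
      ((continuous_iterZ f k).comp continuous_snd)) continuous_const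
  have hfar : IsCompact {p : M × M | η ≤ dist p.1 p.2} :=
    (isClosed_le continuous_const continuous_dist).isCompact
  obtain ⟨s, hs⟩ := hfar.elim_finite_subfamily_closed _ hclosed <| by
    refine eq_empty_of_forall_notMem fun p ⟨hp, hclose⟩ ↦ ?_
    obtain ⟨k, hk⟩ := hf p.1 p.2 (dist_pos.1 (hη.trans_le hp))
    exact hk.not_ge (mem_iInter.1 hclose k)
  refine ⟨s, fun u v huv ↦ ?_⟩
  by_contra! hge
  exact notMem_empty (u, v) (hs ▸ ⟨hge, mem_iInter₂.2 huv⟩)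

lemma eventually_forall_WsLoc_dist_lt (hf : IsExpansive f α) {η : ℝ} (hη : 0 < η) :
    ∀ᶠ k : ℤ in atTop, ∀ x, ∀ y ∈ WsLoc f α x, dist (iterZ f k x) (iterZ f k y) < η := by
  obtain ⟨s, hs⟩ := hf.exists_finset_forall_dist_lt hη
  have hlarge : ∀ᶠ k : ℤ in atTop, ∀ j ∈ s, 0 ≤ j + k :=
    (eventually_all_finset _).2 fun j _ ↦ by
      filter_upwards [eventually_ge_atTop (-j)] with k hk using by omega
  filter_upwards [hlarge] with k hk x y hy
  refine hs _ _ fun j hj ↦ ?_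
  rw [← iterZ_add, ← iterZ_add]
  exact hy _ (hk j hj)

lemma WsLoc_subset_Ws (hf : IsExpansive f α) (x : M) : WsLoc f α x ⊆ Ws f x := fun y hy ↦ by
  refine Metric.tendsto_nhds.2 fun η hη ↦ ?_
  filter_upwards [hf.eventually_forall_WsLoc_dist_lt hη] with k hk
  rw [Real.dist_0_eq_abs, abs_dist]
  exact hk x y hy

lemma eventually_forall_iterZ_mul_mem (hf : IsExpansive f α) {l : ℕ} (hl : 1 ≤ l)
    (hx : iterZ f l x = x) {O : Set M} (hO : O ∈ 𝓝 x) :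
    ∀ᶠ y in 𝓝 x, y ∈ WsLoc f α x → ∀ k : ℕ, iterZ f (l * k) y ∈ O := by
  obtain ⟨η, hη, hηO⟩ := Metric.mem_nhds_iff.1 hO
  obtain ⟨K, hK⟩ := eventually_atTop.1 ((tendsto_const_mul_natCast_atTop hl).eventually
    (hf.eventually_forall_WsLoc_dist_lt hη))
  have hfew : ∀ᶠ y in 𝓝 x, ∀ k ∈ Finset.range K, iterZ f (l * k) y ∈ O :=
    (eventually_all_finset _).2 fun k _ ↦
      (continuous_iterZ f _).continuousAt (by rwa [iterZ_mul_eq_self hx k])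
  filter_upwards [hfew] with y hy hyx k
  rcases lt_or_ge k K with hk | hk
  · exact hy k (Finset.mem_range.2 hk)
  · refine hηO ?_
    rw [mem_ball, dist_comm]
    simpa only [iterZ_mul_eq_self hx k] using hK k hk x y hyx

end IsExpansive

end StableSets

lemma prod_mem_ball_zero_iff {E F : Type*} [SeminormedAddCommGroup E]
    [SeminormedAddCommGroup F] {v : E × F} {ρ : ℝ} :
    v ∈ ball 0 ρ ↔ ‖v.1‖ < ρ ∧ ‖v.2‖ < ρ := by
  rw [mem_ball_zero_iff, Prod.norm_def, max_lt_iff]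

section HyperbolicCharts

variable {E F : Type*} [NormedAddCommGroup E] [NormedSpace ℝ E] [NormedAddCommGroup F]
  [NormedSpace ℝ F] {f : M ≃ₜ M} {q : M} {l : ℕ} {ρ : ℝ}

/-- `φ` is a chart around the `l`-periodic point `q` which conjugates `f^l`, on the ball of radius
`ρ`, to the linear map `(a, b) ↦ (a / 2, 2 b)` of a product of normed spaces. The dynamics is
recorded for pairs of points, because the model map does not preserve the ball. -/
structure IsHyperbolicChart (f : M ≃ₜ M) (q : M) (l : ℕ) (φ : OpenPartialHomeomorph (E × F) M)
    (ρ : ℝ) : Prop where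
  one_le : 1 ≤ l
  iterZ_eq_self : iterZ f l q = q
  radius_pos : 0 < ρ
  ball_subset : ball 0 ρ ⊆ φ.source
  map_zero : φ 0 = q
  iterZ_eq_iff : ∀ v ∈ ball 0 ρ, ∀ w ∈ ball 0 ρ,
    iterZ f l (φ v) = φ w ↔ w = ((2 : ℝ)⁻¹ • v.1, (2 : ℝ) • v.2)

lemma exists_openPartialHomeomorph_of_homeomorph {X Y : Type*} [TopologicalSpace X]
    [TopologicalSpace Y] {U : Set X} {V : Set Y} (hU : IsOpen U) (hV : IsOpen V) (h : U ≃ₜ V)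
    (hne : U.Nonempty) :
    ∃ χ : OpenPartialHomeomorph X Y, χ.source = U ∧ ∀ y (hy : y ∈ U), χ y = h ⟨y, hy⟩ := by
  have : Nonempty U := hne.to_subtype
  let i := hU.isOpenEmbedding_subtypeVal.toOpenPartialHomeomorph
  let j := (hV.isOpenEmbedding_subtypeVal.comp h.isOpenEmbedding).toOpenPartialHomeomorph
  refine ⟨i.symm.trans j, ?_, fun y hy ↦ ?_⟩
  · simp [i, j]
  · have hi : i.symm y = ⟨y, hy⟩ := i.left_inv (x := ⟨y, hy⟩) (mem_univ _)
    simp [hi, j]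

lemma exists_openPartialHomeomorph_of_mem_PerHr {n r : ℕ} (hq : q ∈ PerHr f n r) :
    ∃ l : ℕ, 1 ≤ l ∧ iterZ f l q = q ∧ ∃ χ : OpenPartialHomeomorph M (ModelSp n r),
      q ∈ χ.source ∧ χ q = 0 ∧
        ∀ y ∈ χ.source, iterZ f l y ∈ χ.source → χ (iterZ f l y) = modelL n r (χ y) := by
  obtain ⟨l, hl, hper, U, V, h, hU, hV, -, hq, hhq, hdyn⟩ := hq
  obtain ⟨χ, rfl, hχ⟩ := exists_openPartialHomeomorph_of_homeomorph hU hV h ⟨q, hq⟩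
  simp only [iterZ_natCast]
  refine ⟨l, hl, hper, χ, hq, (hχ q hq).trans hhq, fun y hy hy' ↦ ?_⟩
  rw [hχ _ hy', hχ y hy]
  exact hdyn y hy hy'

lemma exists_isHyperbolicChart {n r : ℕ} (hq : q ∈ PerHr f n r)
    (e : F ≃L[ℝ] (Fin (n - r) → ℝ)) :
    ∃ (l : ℕ) (φ : OpenPartialHomeomorph ((Fin r → ℝ) × F) M) (ρ : ℝ),
      IsHyperbolicChart f q l φ ρ := by
  obtain ⟨l, hl, hper, χ, hqχ, hχq, hdyn⟩ := exists_openPartialHomeomorph_of_mem_PerHr hq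
  let g : ((Fin r → ℝ) × F) ≃L[ℝ] ModelSp n r := (ContinuousLinearEquiv.refl ℝ _).prodCongr e
  have hgL : ∀ v, modelL n r (g v) = g ((2 : ℝ)⁻¹ • v.1, (2 : ℝ) • v.2) := fun v ↦ by
    ext i <;> simp [modelL, g, div_eq_inv_mul]
  let φ := (χ.transHomeomorph g.symm.toHomeomorph).symm
  have hφ : ∀ v, φ v = χ.symm (g v) := fun v ↦ rfl
  have hsource : ∀ v, v ∈ φ.source ↔ g v ∈ χ.target := fun v ↦ Iff.rfl
  have hφ0 : φ 0 = q := by rw [hφ, map_zero, ← hχq, χ.left_inv hqχ]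
  have h0 : 0 ∈ φ.source := by
    rw [hsource, map_zero, ← hχq]
    exact χ.map_source hqχ
  have hnhds : ∀ᶠ v in 𝓝 0, v ∈ φ.source ∧ iterZ f l (φ v) ∈ χ.source := by
    refine (φ.open_source.eventually_mem h0).and ?_
    refine ((continuous_iterZ f l).continuousAt.comp (φ.continuousAt h0)).eventually_mem ?_
    rw [Function.comp_apply, hφ0, hper]
    exact χ.open_source.mem_nhds hqχ
  obtain ⟨ρ, hρ, hball⟩ := Metric.eventually_nhds_iff_ball.1 hnhds
  refine ⟨l, φ, ρ, hl, hper, hρ, fun v hv ↦ (hball v hv).1, hφ0, fun v hv w hw ↦ ?_⟩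
  have hv' := (hsource v).1 (hball v hv).1
  have hw' := (hsource w).1 (hball w hw).1
  calc iterZ f l (φ v) = φ w ↔ χ (iterZ f l (φ v)) = χ (φ w) :=
        (χ.injOn.eq_iff (hball v hv).2 (χ.map_target hw')).symm
    _ ↔ g ((2 : ℝ)⁻¹ • v.1, (2 : ℝ) • v.2) = g w := by
        rw [hdyn (φ v) (χ.map_target hv') (hball v hv).2, hφ v, hφ w, χ.right_inv hv',
          χ.right_inv hw', hgL]
    _ ↔ w = ((2 : ℝ)⁻¹ • v.1, (2 : ℝ) • v.2) := g.injective.eq_iff.trans eq_comm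

namespace IsHyperbolicChart

variable {φ : OpenPartialHomeomorph (E × F) M}

lemma symm (h : IsHyperbolicChart f q l φ ρ) :
    IsHyperbolicChart f.symm q l
      ((Homeomorph.prodComm F E).transOpenPartialHomeomorph φ) ρ where
  one_le := h.one_le
  iterZ_eq_self := by rw [iterZ_symm, iterZ_neg_eq_self h.iterZ_eq_self]
  radius_pos := h.radius_pos
  ball_subset v hv := h.ball_subset
    (prod_mem_ball_zero_iff.2 (prod_mem_ball_zero_iff.1 hv).symm)
  map_zero := h.map_zero
  iterZ_eq_iff v hv w hw := by
    have hswap := h.iterZ_eq_iff w.swap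
      (prod_mem_ball_zero_iff.2 (prod_mem_ball_zero_iff.1 hw).symm) v.swap
      (prod_mem_ball_zero_iff.2 (prod_mem_ball_zero_iff.1 hv).symm)
    change iterZ f.symm l (φ v.swap) = φ w.swap ↔ _
    rw [iterZ_symm, iterZ_neg_eq_iff, hswap]
    simp only [Prod.ext_iff, Prod.fst_swap, Prod.snd_swap]
    rw [eq_inv_smul_iff₀ two_ne_zero, eq_inv_smul_iff₀ two_ne_zero]
    exact ⟨fun h ↦ ⟨h.2.symm, h.1.symm⟩, fun h ↦ ⟨h.2.symm, h.1.symm⟩⟩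

lemma zero_mem_ball (h : IsHyperbolicChart f q l φ ρ) : (0 : E × F) ∈ ball 0 ρ :=
  mem_ball_self h.radius_pos

lemma continuousOn (h : IsHyperbolicChart f q l φ ρ) : ContinuousOn φ (ball 0 ρ) :=
  φ.continuousOn.mono h.ball_subset

lemma injOn (h : IsHyperbolicChart f q l φ ρ) : InjOn φ (ball 0 ρ) :=
  φ.injOn.mono h.ball_subset

lemma iterZ_mul_apply_left (h : IsHyperbolicChart f q l φ ρ) {a : E} (ha : ‖a‖ < ρ) (k : ℕ) :
    iterZ f (l * k) (φ (a, 0)) = φ ((2 : ℝ)⁻¹ ^ k • a, 0) := by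
  have hmem : ∀ k : ℕ, ((2 : ℝ)⁻¹ ^ k • a, (0 : F)) ∈ ball (0 : E × F) ρ := fun k ↦ by
    refine prod_mem_ball_zero_iff.2 ⟨?_, by simpa using h.radius_pos⟩
    rw [norm_smul]
    refine (mul_le_of_le_one_left (norm_nonneg a) ?_).trans_lt ha
    rw [norm_pow]
    exact pow_le_one₀ (norm_nonneg _) (by norm_num)
  induction k with
  | zero => simp
  | succ i ih =>
    rw [iterZ_mul_succ, ih, h.iterZ_eq_iff _ (hmem i) _ (hmem (i + 1))]
    simp [smul_smul, pow_succ']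

lemma iterZ_mul_apply_right (h : IsHyperbolicChart f q l φ ρ) {b : F} {k : ℕ}
    (hb : ‖(2 : ℝ) ^ k • b‖ < ρ) : iterZ f (l * k) (φ (0, b)) = φ (0, (2 : ℝ) ^ k • b) := by
  have hback := h.symm.iterZ_mul_apply_left hb k
  rw [iterZ_symm, smul_smul, ← mul_pow, inv_mul_cancel₀ two_ne_zero, one_pow, one_smul] at hback
  have := congrArg (iterZ f (l * k)) hback
  rw [iterZ_iterZ_neg] at this
  exact this.symm

lemma apply_left_mem_Ws (h : IsHyperbolicChart f q l φ ρ) {a : E} (ha : ‖a‖ < ρ) :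
    φ (a, 0) ∈ Ws f q := by
  refine mem_Ws_of_tendsto_iterZ_mul h.one_le h.iterZ_eq_self ?_
  simp only [h.iterZ_mul_apply_left ha]
  have hpow : Tendsto (fun k : ℕ ↦ (2 : ℝ)⁻¹ ^ k • a) atTop (𝓝 0) := by
    simpa using (tendsto_pow_atTop_nhds_zero_of_lt_one (by norm_num : (0 : ℝ) ≤ 2⁻¹)
      (by norm_num)).smul_const a
  have hcont := φ.continuousAt (h.ball_subset h.zero_mem_ball)
  rw [ContinuousAt, h.map_zero] at hcont
  exact hcont.comp (hpow.prodMk_nhds tendsto_const_nhds)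

lemma apply_right_mem_Wu (h : IsHyperbolicChart f q l φ ρ) {b : F} (hb : ‖b‖ < ρ) :
    φ (0, b) ∈ Wu f q := by
  rw [Wu_eq_Ws_symm]
  exact h.symm.apply_left_mem_Ws hb

lemma snd_eq_zero_of_forall_mem (h : IsHyperbolicChart f q l φ ρ) {v : E × F}
    (hv : v ∈ ball 0 ρ) (horbit : ∀ k : ℕ, iterZ f (l * k) (φ v) ∈ φ '' ball 0 ρ) : v.2 = 0 := by
  choose w hw hwv using horbit
  have hsnd : ∀ k, (w k).2 = (2 : ℝ) ^ k • v.2 := fun k ↦ by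
    induction k with
    | zero => simp [h.injOn (hw 0) hv (by simpa using hwv 0)]
    | succ i ih =>
      have hstep := hwv (i + 1)
      rw [iterZ_mul_succ, ← hwv i, eq_comm, h.iterZ_eq_iff _ (hw i) _ (hw (i + 1))] at hstep
      rw [hstep, ih, smul_smul, pow_succ']
  by_contra hne
  obtain ⟨k, hk⟩ := pow_unbounded_of_one_lt (ρ / ‖v.2‖) (one_lt_two (α := ℝ))
  rw [div_lt_iff₀ (norm_pos_iff.2 hne)] at hk
  have hlt := (prod_mem_ball_zero_iff.1 (hw k)).2
  rw [hsnd, norm_smul, norm_pow, Real.norm_two] at hlt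
  exact hlt.not_gt hk

lemma mono (h : IsHyperbolicChart f q l φ ρ) {σ : ℝ} (hσ : 0 < σ) (hσρ : σ ≤ ρ) :
    IsHyperbolicChart f q l φ σ where
  one_le := h.one_le
  iterZ_eq_self := h.iterZ_eq_self
  radius_pos := hσ
  ball_subset := (ball_subset_ball hσρ).trans h.ball_subset
  map_zero := h.map_zero
  iterZ_eq_iff v hv w hw :=
    h.iterZ_eq_iff v (ball_subset_ball hσρ hv) w (ball_subset_ball hσρ hw)

lemma exists_radius_forall_snd_eq_zero [CompactSpace M] {α : ℝ} (h : IsHyperbolicChart f q l φ ρ)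
    (hf : IsExpansive f α) :
    ∃ σ, IsHyperbolicChart f q l φ σ ∧ ∀ v ∈ ball 0 σ, φ v ∈ WsLoc f α q → v.2 = 0 := by
  have himage : φ '' ball 0 ρ ∈ 𝓝 q :=
    (φ.isOpen_image_of_subset_source isOpen_ball h.ball_subset).mem_nhds
      ⟨0, h.zero_mem_ball, h.map_zero⟩
  have horbit := hf.eventually_forall_iterZ_mul_mem h.one_le h.iterZ_eq_self himage
  rw [← h.map_zero] at horbit
  have hcont := φ.continuousAt (h.ball_subset h.zero_mem_ball)
  obtain ⟨σ, hσ, hball⟩ := Metric.eventually_nhds_iff_ball.1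
    ((hcont.eventually horbit).and (ball_mem_nhds 0 h.radius_pos))
  rw [h.map_zero] at hball
  refine ⟨min σ ρ, h.mono (lt_min hσ h.radius_pos) (min_le_right _ _), fun v hv hvq ↦ ?_⟩
  obtain ⟨hvorbit, hvρ⟩ := hball v (ball_subset_ball (min_le_left _ _) hv)
  exact h.snd_eq_zero_of_forall_mem hvρ (hvorbit hvq)

end IsHyperbolicChart

end HyperbolicCharts

lemma ball_prodMk_zero {E : Type*} [PseudoMetricSpace E] (a : E) (r : ℝ) :
    ball (a, (0 : ℝ)) r = ball a r ×ˢ Ioo (-r) r := by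
  rw [← ball_prod_same, Real.ball_eq_Ioo, zero_sub, zero_add]

lemma isTwoSidedNhd_of_chart {X E : Type*} [TopologicalSpace X] [NormedAddCommGroup E]
    [NormedSpace ℝ E] {B S : Set X} {ψ : OpenPartialHomeomorph (E × ℝ) X} {a : E} {r : ℝ}
    (hr : 0 < r) (hsource : ball (a, 0) r ⊆ ψ.source) (hB : MapsTo ψ (ball (a, 0) r) B)
    (hS : ∀ v ∈ ball (a, (0 : ℝ)) r, ψ v ∈ S ↔ v.2 = 0) :
    IsTwoSidedNhd B S (ψ '' ball (a, 0) r) (ψ '' (ball a r ×ˢ Ioo 0 r))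
      (ψ '' (ball a r ×ˢ Ioo (-r) 0)) := by
  have hupper : ball a r ×ˢ Ioo 0 r ⊆ ball (a, (0 : ℝ)) r :=
    ball_prodMk_zero a r ▸ prod_mono Subset.rfl (Ioo_subset_Ioo_left (by linarith))
  have hlower : ball a r ×ˢ Ioo (-r) 0 ⊆ ball (a, (0 : ℝ)) r :=
    ball_prodMk_zero a r ▸ prod_mono Subset.rfl (Ioo_subset_Ioo_right hr.le)
  have hcont : ContinuousOn ψ (ball (a, 0) r) := ψ.continuousOn.mono hsource
  have image_subset : ∀ {T}, T ⊆ ball (a, (0 : ℝ)) r → (∀ v ∈ T, v.2 ≠ 0) → ψ '' T ⊆ B \ S :=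
    fun hT hne ↦ image_subset_iff.2 fun v hv ↦
      ⟨hB (hT hv), fun hvS ↦ hne v hv ((hS v (hT hv)).1 hvS)⟩
  have subset_closure_image : ∀ {I : Set ℝ}, 0 ∈ closure I →
      ψ '' ball (a, 0) r ∩ S ⊆ closure (ψ '' (ball a r ×ˢ I)) := by
    rintro I hI _ ⟨⟨⟨b, t⟩, hv, rfl⟩, hvS⟩
    obtain rfl : t = 0 := (hS _ hv).1 hvS
    refine mem_closure_image (ψ.continuousAt (hsource hv)) ?_
    rw [closure_prod_eq]
    exact ⟨subset_closure (ball_prodMk_zero a r ▸ hv).1, hI⟩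
  refine ⟨ψ.isOpen_image_of_subset_source isOpen_ball hsource, ?_, ?_,
    image_subset hupper fun v hv ↦ hv.2.1.ne', image_subset hlower fun v hv ↦ hv.2.2.ne, ?_,
    subset_closure_image ?_, subset_closure_image ?_⟩
  · exact ((convex_ball a r).isPreconnected.prod isPreconnected_Ioo).image _ (hcont.mono hupper)
  · exact ((convex_ball a r).isPreconnected.prod isPreconnected_Ioo).image _ (hcont.mono hlower)
  · rintro _ ⟨v, hv, rfl⟩
    obtain ⟨hva, hv₁, hv₂⟩ := ball_prodMk_zero a r ▸ hv
    rcases lt_trichotomy v.2 0 with h | h | h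
    · exact .inr (.inr ⟨v, ⟨hva, hv₁, h⟩, rfl⟩)
    · exact .inl ((hS v hv).2 h)
    · exact .inr (.inl ⟨v, ⟨hva, h, hv₂⟩, rfl⟩)
  · exact closure_Ioo hr.ne ▸ left_mem_Icc.2 hr.le
  · exact closure_Ioo (neg_lt_zero.2 hr).ne ▸ right_mem_Icc.2 (neg_lt_zero.2 hr).le

section StablePlaques

variable {f : M ≃ₜ M} {α ν : ℝ} {x q r w : M}

lemma mem_SpSet_self (hq : q ∈ ball x ν) : q ∈ SpSet f x ν q :=
  mem_connectedComponentIn ⟨mem_Ws_self f q, hq⟩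

lemma SpSet_subset_Ws : SpSet f x ν q ⊆ Ws f q :=
  (connectedComponentIn_subset _ _).trans inter_subset_left

lemma SpSet_subset_ball : SpSet f x ν q ⊆ ball x ν :=
  (connectedComponentIn_subset _ _).trans inter_subset_right

lemma SpSet_eq_of_mem_of_mem (hq : w ∈ SpSet f x ν q) (hr : w ∈ SpSet f x ν r) :
    SpSet f x ν q = SpSet f x ν r := by
  have hWs : Ws f q = Ws f r :=
    (Ws_eq_of_mem (SpSet_subset_Ws hq)).symm.trans (Ws_eq_of_mem (SpSet_subset_Ws hr))
  rw [SpSet, hWs] at hq ⊢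
  exact connectedComponentIn_eq_of_mem_of_mem hq hr

lemma isOpen_ball_diff_SpSet [CompactSpace M] (hf : IsExpansive f α)
    (hs : SpSet f x ν q ⊆ WsLoc f α q) : IsOpen (ball x ν \ SpSet f x ν q) := by
  have hclosure : closure (SpSet f x ν q) ∩ ball x ν ⊆ SpSet f x ν q := by
    rcases (SpSet f x ν q).eq_empty_or_nonempty with hempty | ⟨s, hsS⟩
    · simp [hempty]
    refine subset_connectedComponentIn_of_mem
      (isPreconnected_connectedComponentIn.subset_closure
        (subset_inter subset_closure SpSet_subset_ball) inter_subset_left)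
      (inter_subset_inter_left _ ?_) ⟨subset_closure hsS, SpSet_subset_ball hsS⟩ hsS
    exact (closure_minimal hs (isClosed_WsLoc f α q)).trans (hf.WsLoc_subset_Ws q)
  have heq : ball x ν \ SpSet f x ν q = ball x ν \ closure (SpSet f x ν q) :=
    Subset.antisymm (fun u hu ↦ ⟨hu.1, fun hc ↦ hu.2 (hclosure ⟨hc, hu.1⟩)⟩)
      (sdiff_subset_sdiff_right subset_closure)
  exact heq ▸ isOpen_ball.sdiff isClosed_closure

end StablePlaques

namespace IsHyperbolicChart

variable {E F : Type*} [NormedAddCommGroup E] [NormedSpace ℝ E] [NormedAddCommGroup F]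
  [NormedSpace ℝ F] {f : M ≃ₜ M} {x q w : M} {l : ℕ} {α ρ ν r : ℝ} {a : E}

lemma iterZ_neg_apply_mem_SpSet_iff {φ : OpenPartialHomeomorph (E × F) M}
    (h : IsHyperbolicChart f q l φ ρ) (hplane : ∀ v ∈ ball 0 ρ, φ v ∈ WsLoc f α q → v.2 = 0)
    (hs : SpSet f x ν q ⊆ WsLoc f α q) {k : ℕ} (hr : 0 < r) (hrρ : ball (a, (0 : F)) r ⊆ ball 0 ρ)
    (hB : MapsTo (fun v ↦ iterZ f (-(l * k)) (φ v)) (ball (a, 0) r) (ball x ν))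
    (ha : iterZ f (-(l * k)) (φ (a, 0)) ∈ SpSet f x ν q) {v : E × F} (hv : v ∈ ball (a, 0) r) :
    iterZ f (-(l * k)) (φ v) ∈ SpSet f x ν q ↔ v.2 = 0 := by
  refine ⟨fun hvS ↦ hplane v (hrρ hv) ?_, fun hv0 ↦ ?_⟩
  · simpa only [iterZ_iterZ_neg, iterZ_mul_eq_self h.iterZ_eq_self] using
      iterZ_mem_WsLoc (by positivity : (0 : ℤ) ≤ l * k) (hs hvS)
  · have hplaneball : ball a r ×ˢ {(0 : F)} ⊆ ball (a, 0) r :=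
      ball_prod_same a (0 : F) r ▸
        prod_mono Subset.rfl (singleton_subset_iff.2 (mem_ball_self hr))
    have hconn : IsPreconnected
        ((fun v ↦ iterZ f (-(l * k)) (φ v)) '' (ball a r ×ˢ {(0 : F)})) :=
      ((convex_ball a r).isPreconnected.prod isPreconnected_singleton).image _
        ((continuous_iterZ f _).comp_continuousOn (h.continuousOn.mono (hplaneball.trans hrρ)))
    refine subset_connectedComponentIn_of_mem hconn ?_
      ⟨(a, 0), ⟨mem_ball_self hr, rfl⟩, rfl⟩ ha
      ⟨v, ⟨(ball_prod_same a (0 : F) r ▸ hv : v ∈ ball a r ×ˢ ball 0 r).1, hv0⟩, rfl⟩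
    rintro _ ⟨⟨b, t⟩, hb, rfl⟩
    obtain rfl : t = 0 := hb.2
    refine ⟨?_, hB (hplaneball hb)⟩
    simpa only [iterZ_neg_eq_self (iterZ_mul_eq_self h.iterZ_eq_self k)] using
      iterZ_mem_Ws (-(l * k))
        (h.apply_left_mem_Ws (prod_mem_ball_zero_iff.1 (hrρ (hplaneball hb))).1)

variable {φ : OpenPartialHomeomorph (E × ℝ) M}

lemma exists_radius_isTwoSidedNhd (h : IsHyperbolicChart f q l φ ρ)
    (hplane : ∀ v ∈ ball 0 ρ, φ v ∈ WsLoc f α q → v.2 = 0)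
    (hs : SpSet f x ν q ⊆ WsLoc f α q) {k : ℕ} (ha : ‖a‖ < ρ) (hwa : iterZ f (l * k) w = φ (a, 0))
    (hw : w ∈ SpSet f x ν q) :
    ∃ r > 0, IsTwoSidedNhd (ball x ν) (SpSet f x ν q)
      ((fun v ↦ iterZ f (-(l * k)) (φ v)) '' ball (a, 0) r)
      ((fun v ↦ iterZ f (-(l * k)) (φ v)) '' (ball a r ×ˢ Ioo 0 r))
      ((fun v ↦ iterZ f (-(l * k)) (φ v)) '' (ball a r ×ˢ Ioo (-r) 0)) := by
  let ψ := φ.transHomeomorph (f ^ (-(l * k : ℤ)))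
  have hψ : ⇑ψ = fun v ↦ iterZ f (-(l * k)) (φ v) := by
    ext v
    rw [iterZ_eq_zpow]
    rfl
  have ha0 : (a, (0 : ℝ)) ∈ ball 0 ρ := prod_mem_ball_zero_iff.2 ⟨ha, by simpa using h.radius_pos⟩
  have hψa : ψ (a, 0) = w := by simp only [hψ, ← hwa, iterZ_neg_iterZ]
  have hnhds : ∀ᶠ v in 𝓝 (a, (0 : ℝ)), v ∈ ball 0 ρ ∧ ψ v ∈ ball x ν :=
    (isOpen_ball.eventually_mem ha0).and
      ((ψ.continuousAt (h.ball_subset ha0)).eventually_mem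
        (isOpen_ball.mem_nhds (hψa ▸ SpSet_subset_ball hw)))
  obtain ⟨r, hr, hball⟩ := Metric.eventually_nhds_iff_ball.1 hnhds
  refine ⟨r, hr, hψ ▸ isTwoSidedNhd_of_chart hr (fun v hv ↦ h.ball_subset (hball v hv).1)
    (fun v hv ↦ (hball v hv).2) fun v hv ↦ ?_⟩
  simp only [hψ] at hball hψa ⊢
  exact h.iterZ_neg_apply_mem_SpSet_iff hplane hs hr (fun v hv ↦ (hball v hv).1)
    (fun v hv ↦ (hball v hv).2) (hψa ▸ hw) hv

lemma exists_isTwoSidedNhd (h : IsHyperbolicChart f q l φ ρ)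
    (hplane : ∀ v ∈ ball 0 ρ, φ v ∈ WsLoc f α q → v.2 = 0)
    (hs : SpSet f x ν q ⊆ WsLoc f α q) (hw : w ∈ SpSet f x ν q) :
    ∃ O H₁ H₂, w ∈ O ∧ IsTwoSidedNhd (ball x ν) (SpSet f x ν q) O H₁ H₂ := by
  have himage : φ '' ball 0 ρ ∈ 𝓝 q :=
    (φ.isOpen_image_of_subset_source isOpen_ball h.ball_subset).mem_nhds
      ⟨0, h.zero_mem_ball, h.map_zero⟩
  obtain ⟨k, ⟨a, t⟩, hv, hvw⟩ := ((tendsto_iterZ_mul_of_mem_Ws h.one_le h.iterZ_eq_self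
    (SpSet_subset_Ws hw)).eventually_mem himage).exists
  obtain rfl : t = 0 := hplane _ hv <| by
    simpa only [hvw, iterZ_mul_eq_self h.iterZ_eq_self] using
      iterZ_mem_WsLoc (by positivity : (0 : ℤ) ≤ l * k) (hs hw)
  obtain ⟨r, hr, htwo⟩ :=
    h.exists_radius_isTwoSidedNhd hplane hs (prod_mem_ball_zero_iff.1 hv).1 hvw.symm hw
  refine ⟨_, _, _, ?_, htwo⟩
  exact ⟨(a, 0), mem_ball_self hr, by simp only [hvw, iterZ_neg_iterZ]⟩

lemma exists_isTwoSidedNhd_self (h : IsHyperbolicChart f q l φ ρ)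
    (hplane : ∀ v ∈ ball 0 ρ, φ v ∈ WsLoc f α q → v.2 = 0)
    (hs : SpSet f x ν q ⊆ WsLoc f α q) (hq : q ∈ ball x ν) :
    ∃ O H₁ H₂, q ∈ O ∧ IsTwoSidedNhd (ball x ν) (SpSet f x ν q) O H₁ H₂ ∧
      (∀ᶠ t in 𝓝[>] 0, φ (0, t) ∈ H₁) ∧ ∀ᶠ t in 𝓝[<] 0, φ (0, t) ∈ H₂ := by
  have hq0 : φ (0, 0) = q := h.map_zero
  obtain ⟨r, hr, htwo⟩ := h.exists_radius_isTwoSidedNhd hplane hs (k := 0) (a := 0)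
    (by simpa using h.radius_pos) (by simp [hq0]) (mem_SpSet_self hq)
  simp only [Nat.cast_zero, mul_zero, neg_zero, iterZ_zero] at htwo
  refine ⟨_, _, _, ?_, htwo, ?_, ?_⟩
  · exact ⟨(0, 0), mem_ball_self hr, hq0⟩
  · filter_upwards [Ioo_mem_nhdsGT hr] with t ht using ⟨(0, t), ⟨mem_ball_self hr, ht⟩, rfl⟩
  · filter_upwards [Ioo_mem_nhdsLT (neg_lt_zero.2 hr)] with t ht
      using ⟨(0, t), ⟨mem_ball_self hr, ht⟩, rfl⟩

end IsHyperbolicChart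

lemma exists_isHyperbolicChart_real {f : M ≃ₜ M} {q : M} {n : ℕ} (hn : 1 ≤ n)
    (hq : q ∈ PerHr f n (n - 1)) :
    ∃ (l : ℕ) (φ : OpenPartialHomeomorph ((Fin (n - 1) → ℝ) × ℝ) M) (ρ : ℝ),
      IsHyperbolicChart f q l φ ρ := by
  have hcard : n - (n - 1) = 1 := by omega
  let _ : Unique (Fin (n - (n - 1))) := (finCongr hcard).unique
  exact exists_isHyperbolicChart hq (ContinuousLinearEquiv.funUnique _ ℝ ℝ).symm

lemma isOpen_singleton_of_mem_PerHr_zero {f : M ≃ₜ M} {q : M} (hq : q ∈ PerHr f 0 0) :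
    IsOpen {q} := by
  obtain ⟨-, -, -, χ, hqχ, -⟩ := exists_openPartialHomeomorph_of_mem_PerHr hq
  have : Subsingleton (ModelSp 0 0) :=
    inferInstanceAs (Subsingleton ((Fin 0 → ℝ) × (Fin 0 → ℝ)))
  have hsource : χ.source = {q} := eq_singleton_iff_unique_mem.2
    ⟨hqχ, fun y hy ↦ χ.injOn hy hqχ (Subsingleton.elim _ _)⟩
  exact hsource ▸ χ.open_source

section UnstableBranches

/-- The image under `f^{lk}` of the segment from `0` to `b` in the expanding direction of the chart
`φ`, parametrized by `[0, 1]`. As `k` grows, these arcs exhaust one branch of the unstable set. -/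
def unstableArc {E F : Type*} [NormedAddCommGroup E] [NormedAddCommGroup F] [NormedSpace ℝ F]
    (f : M ≃ₜ M) (l : ℕ) (φ : OpenPartialHomeomorph (E × F) M) (b : F) (k : ℕ) (s : ℝ) : M :=
  iterZ f (l * k) (φ (0, s • b))

lemma norm_smul_lt_of_mem_Icc {F : Type*} [SeminormedAddCommGroup F] [NormedSpace ℝ F] {b : F}
    {ρ s : ℝ} (hb : ‖b‖ < ρ) (hs : s ∈ Icc (0 : ℝ) 1) : ‖s • b‖ < ρ := by
  rw [norm_smul, Real.norm_of_nonneg hs.1]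
  exact (mul_le_of_le_one_left (norm_nonneg b) hs.2).trans_lt hb

lemma mem_UpSet_self {f : M ≃ₜ M} {ν : ℝ} {x q : M} (hq : q ∈ ball x ν) : q ∈ UpSet f x ν q :=
  mem_connectedComponentIn ⟨mem_Wu_self f q, hq⟩

/-- `D` is one side of the unstable arc of `q` inside `closedBall z η`, followed from `q` (which is
excluded) until it reaches the sphere. -/
structure IsUnstableBranch (f : M ≃ₜ M) (x : M) (ν : ℝ) (z : M) (η : ℝ) (q : M) (D : Set M) :
    Prop where
  isPreconnected : IsPreconnected D
  isPreconnected_insert : IsPreconnected (insert q D)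
  subset : D ⊆ UpSet f x ν q ∩ closedBall z η
  subset_diff : D ⊆ ball x ν \ SpSet f x ν q
  inter_sphere_nonempty : (D ∩ sphere z η).Nonempty

namespace IsHyperbolicChart

variable {E F : Type*} [NormedAddCommGroup E] [NormedSpace ℝ E] [NormedAddCommGroup F]
  [NormedSpace ℝ F] {f : M ≃ₜ M} {x q z : M} {l k : ℕ} {α ρ ν η c s : ℝ} {b : F}
  {φ : OpenPartialHomeomorph (E × F) M}

lemma zero_smul_mem_ball (h : IsHyperbolicChart f q l φ ρ) (hb : ‖b‖ < ρ)
    (hs : s ∈ Icc (0 : ℝ) 1) : ((0 : E), s • b) ∈ ball 0 ρ :=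
  prod_mem_ball_zero_iff.2 ⟨by simpa using h.radius_pos, norm_smul_lt_of_mem_Icc hb hs⟩

lemma continuousOn_unstableArc (h : IsHyperbolicChart f q l φ ρ) (hb : ‖b‖ < ρ) :
    ContinuousOn (unstableArc f l φ b k) (Icc 0 1) :=
  (continuous_iterZ f _).comp_continuousOn <| h.continuousOn.comp
    (by fun_prop) fun _ hs ↦ h.zero_smul_mem_ball hb hs

lemma unstableArc_zero (h : IsHyperbolicChart f q l φ ρ) : unstableArc f l φ b k 0 = q := by
  rw [unstableArc, zero_smul, Prod.mk_zero_zero, h.map_zero, iterZ_mul_eq_self h.iterZ_eq_self]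

lemma unstableArc_mem_Wu (h : IsHyperbolicChart f q l φ ρ) (hb : ‖b‖ < ρ)
    (hs : s ∈ Icc (0 : ℝ) 1) : unstableArc f l φ b k s ∈ Wu f q := by
  simpa only [iterZ_mul_eq_self h.iterZ_eq_self, unstableArc] using
    iterZ_mem_Wu (l * k) (h.apply_right_mem_Wu (norm_smul_lt_of_mem_Icc hb hs))

lemma unstableArc_ne (h : IsHyperbolicChart f q l φ ρ) (hb₀ : b ≠ 0) (hb : ‖b‖ < ρ)
    (hs : s ∈ Ioc (0 : ℝ) 1) : unstableArc f l φ b k s ≠ q := fun heq ↦ by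
  rw [unstableArc, ← iterZ_neg_eq_iff, iterZ_neg_eq_self (iterZ_mul_eq_self h.iterZ_eq_self k),
    ← h.map_zero] at heq
  have hzero := h.injOn h.zero_mem_ball (h.zero_smul_mem_ball hb ⟨hs.1.le, hs.2⟩) heq
  exact smul_ne_zero hs.1.ne' hb₀ (congrArg Prod.snd hzero).symm

lemma image_unstableArc_subset_UpSet (h : IsHyperbolicChart f q l φ ρ) (hb : ‖b‖ < ρ)
    (hc : c ∈ Icc (0 : ℝ) 1) (hB : MapsTo (unstableArc f l φ b k) (Icc 0 c) (ball x ν)) :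
    unstableArc f l φ b k '' Icc 0 c ⊆ UpSet f x ν q := by
  refine IsPreconnected.subset_connectedComponentIn (isPreconnected_Icc.image _
    ((h.continuousOn_unstableArc hb).mono (Icc_subset_Icc_right hc.2)))
    ⟨0, left_mem_Icc.2 hc.1, h.unstableArc_zero⟩ ?_
  rintro _ ⟨s, hs, rfl⟩
  exact ⟨h.unstableArc_mem_Wu hb ⟨hs.1, hs.2.trans hc.2⟩, hB hs⟩

lemma eventually_apply_mem_image_unstableArc (h : IsHyperbolicChart f q l φ ρ) (hb : ‖b‖ < ρ)
    (hc : 0 < c) : ∀ᶠ s in 𝓝[>] (0 : ℝ), φ (0, s • b) ∈ unstableArc f l φ b k '' Ioc 0 c := by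
  have hpow : (0 : ℝ) < 2 ^ k := by positivity
  filter_upwards [Ioo_mem_nhdsGT (lt_min one_pos (mul_pos hc hpow))] with s hs
  obtain ⟨hs₁, hsc⟩ := lt_min_iff.1 hs.2
  refine ⟨s / 2 ^ k, ⟨by have := hs.1; positivity, (div_le_iff₀ hpow).2 hsc.le⟩, ?_⟩
  have hsmul : (2 : ℝ) ^ k • (s / 2 ^ k) • b = s • b := by
    rw [smul_smul, mul_div_cancel₀ s hpow.ne']
  have hmap := h.iterZ_mul_apply_right (k := k) (b := (s / 2 ^ k) • b)
    (hsmul ▸ norm_smul_lt_of_mem_Icc hb ⟨hs.1.le, hs₁.le⟩)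
  rw [unstableArc, hmap, hsmul]

lemma exists_le_dist_unstableArc (h : IsHyperbolicChart f q l φ ρ) (hf : IsExpansive f α)
    (hu : UpSet f x ν q ⊆ WuLoc f α q) (hzη : closedBall z η ⊆ ball x ν) (hb₀ : b ≠ 0)
    (hb : ‖b‖ < ρ) : ∃ k, ∃ s ∈ Icc (0 : ℝ) 1, η ≤ dist (unstableArc f l φ b k s) z := by
  by_contra! hinside
  have hone : (1 : ℝ) ∈ Icc (0 : ℝ) 1 := right_mem_Icc.2 zero_le_one
  refine h.unstableArc_ne (k := 0) hb₀ hb (right_mem_Ioc.2 one_pos)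
    (hf.eq_of_forall_iterZ_mul_mem_WuLoc h.one_le h.iterZ_eq_self fun k ↦ hu ?_)
  refine h.image_unstableArc_subset_UpSet (k := k) hb hone
    (fun s hs ↦ hzη (hinside k s hs).le) ⟨1, hone, ?_⟩
  simp [unstableArc]

lemma exists_unstable_branch (h : IsHyperbolicChart f q l φ ρ) (hf : IsExpansive f α)
    (hs : SpSet f x ν q ⊆ WsLoc f α q) (hu : UpSet f x ν q ⊆ WuLoc f α q)
    (hq : q ∈ ball z η) (hzη : closedBall z η ⊆ ball x ν) (hb₀ : b ≠ 0) (hb : ‖b‖ < ρ) :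
    ∃ D, IsUnstableBranch f x ν z η q D ∧ ∀ᶠ s in 𝓝[>] (0 : ℝ), φ (0, s • b) ∈ D := by
  obtain ⟨k, s₀, hs₀, hexit⟩ := h.exists_le_dist_unstableArc hf hu hzη hb₀ hb
  have hcont : ContinuousOn (unstableArc f l φ b k) (Icc 0 1) := h.continuousOn_unstableArc hb
  obtain ⟨c, hc, hcη, hbefore⟩ := exists_first_hitting hs₀.1
    ((continuous_id.dist continuous_const).comp_continuousOn
      (hcont.mono (Icc_subset_Icc_right hs₀.2)))
    (by simpa [h.unstableArc_zero] using hq) hexit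
  have hc₁ : c ≤ 1 := hc.2.trans hs₀.2
  have hcI : Ioc 0 c ⊆ Icc 0 c := Ioc_subset_Icc_self
  have hUp := h.image_unstableArc_subset_UpSet hb ⟨hc.1.le, hc₁⟩ fun s hs ↦ hzη (hbefore s hs)
  refine ⟨unstableArc f l φ b k '' Ioc 0 c,
    ⟨isPreconnected_Ioc.image _ (hcont.mono (hcI.trans (Icc_subset_Icc_right hc₁))), ?_, ?_, ?_,
      ⟨_, mem_image_of_mem _ (right_mem_Ioc.2 hc.1), hcη⟩⟩,
    h.eventually_apply_mem_image_unstableArc hb hc.1⟩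
  · have hinsert :
        insert q (unstableArc f l φ b k '' Ioc 0 c) = unstableArc f l φ b k '' Icc 0 c := by
      rw [← Ioc_insert_left hc.1.le, image_insert_eq, h.unstableArc_zero]
    exact hinsert ▸ isPreconnected_Icc.image _ (hcont.mono (Icc_subset_Icc_right hc₁))
  · rintro _ ⟨s, hs, rfl⟩
    exact ⟨hUp ⟨s, hcI hs, rfl⟩, hbefore s (hcI hs)⟩
  · rintro _ ⟨s, hs', rfl⟩
    refine ⟨hzη (hbefore s (hcI hs')), fun hS ↦ ?_⟩
    exact h.unstableArc_ne hb₀ hb ⟨hs'.1, hs'.2.trans hc₁⟩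
      (hf.eq_of_mem_WsLoc_of_mem_WuLoc (hs hS) (hu (hUp ⟨s, hcI hs', rfl⟩)))

end IsHyperbolicChart

lemma one_le_of_mem_PerHr {f : M ≃ₜ M} {ν : ℝ} {x q : M} {n : ℕ} (hq : q ∈ PerHr f n (n - 1))
    (hqB : q ∈ ball x ν) (hx : x ∈ ball x ν \ SpSet f x ν q) (hB : IsPreconnected (ball x ν)) :
    1 ≤ n := by
  rcases n with _ | n
  · have hclopen : IsClopen {q} := ⟨isClosed_singleton, isOpen_singleton_of_mem_PerHr_zero hq⟩
    obtain rfl : x = q := hB.subset_isClopen hclopen ⟨q, hqB, rfl⟩ hx.1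
    exact absurd (mem_SpSet_self hqB) hx.2
  · omega

lemma IsUnstableBranch.exists_isPreconnected_crossing {f : M ≃ₜ M} {ν η : ℝ} {x q z : M}
    {D₁ D₂ : Set M} (h₁ : IsUnstableBranch f x ν z η q D₁) (h₂ : IsUnstableBranch f x ν z η q D₂)
    (hin : (D₁ ∩ ShatSet f x ν q).Nonempty) (hout : (D₂ \ ShatSet f x ν q).Nonempty)
    (hqB : q ∈ ball x ν) (hq : q ∈ ball z η) :
    ∃ Y, IsPreconnected Y ∧ Y ⊆ UpSet f x ν q ∩ closedBall z η ∧
      (Y ∩ sphere z η ∩ ShatSet f x ν q).Nonempty ∧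
      ((Y ∩ sphere z η) \ ShatSet f x ν q).Nonempty := by
  have hqU : q ∈ UpSet f x ν q ∩ closedBall z η := ⟨mem_UpSet_self hqB, ball_subset_closedBall hq⟩
  refine ⟨insert q D₁ ∪ insert q D₂, h₁.isPreconnected_insert.union q (mem_insert _ _)
    (mem_insert _ _) h₂.isPreconnected_insert,
    union_subset (insert_subset hqU h₁.subset) (insert_subset hqU h₂.subset), ?_, ?_⟩
  · obtain ⟨u, hu, hufill⟩ := hin
    obtain ⟨a, ha, haη⟩ := h₁.inter_sphere_nonempty
    exact ⟨a, ⟨.inl (.inr ha), haη⟩,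
      subset_filling_of_mem h₁.isPreconnected h₁.subset_diff hu hufill ha⟩
  · obtain ⟨u, hu, hufill⟩ := hout
    obtain ⟨a, ha, haη⟩ := h₂.inter_sphere_nonempty
    exact ⟨a, ⟨.inr (.inr ha), haη⟩, fun hafill ↦ disjoint_left.1
      (disjoint_filling_of_mem h₂.isPreconnected h₂.subset_diff hu hufill) hafill ha⟩

/-- The setting in which a plaque `S_q` of a hyperbolic periodic point of index `n - 1` separates
`B_ν(x)`, and both local plaques of `q` are controlled by the expansivity constant. -/
structure IsSeparatingPoint (f : M ≃ₜ M) (α : ℝ) (n : ℕ) (x : M) (ν : ℝ) (q : M) : Prop where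
  mem_PerHr : q ∈ PerHr f n (n - 1)
  mem_ball : q ∈ ball x ν
  stable : SpSet f x ν q ⊆ WsLoc f α q
  unstable : UpSet f x ν q ⊆ WuLoc f α q
  twoComponents : ∃ V₁ V₂, TwoComponents (ball x ν \ SpSet f x ν q) V₁ V₂

lemma IsSeparatingPoint.exists_isPreconnected_crossing [CompactSpace M] [LocallyConnectedSpace M]
    {f : M ≃ₜ M} {α ν η : ℝ} {x q z : M} {n : ℕ} (hqsep : IsSeparatingPoint f α n x ν q)
    (hf : IsExpansive f α) (hB : IsPreconnected (ball x ν)) (hx : x ∈ ball x ν \ SpSet f x ν q)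
    (hq : q ∈ ball z η) (hzη : closedBall z η ⊆ ball x ν) :
    ∃ Y, IsPreconnected Y ∧ Y ⊆ UpSet f x ν q ∩ closedBall z η ∧
      (Y ∩ sphere z η ∩ ShatSet f x ν q).Nonempty ∧
      ((Y ∩ sphere z η) \ ShatSet f x ν q).Nonempty := by
  obtain ⟨hper, hqB, hs, hu, V₁, V₂, hV⟩ := hqsep
  obtain ⟨l, φ, ρ', hchart⟩ :=
    exists_isHyperbolicChart_real (one_le_of_mem_PerHr hper hqB hx hB) hper
  obtain ⟨ρ, h, hplane⟩ := hchart.exists_radius_forall_snd_eq_zero hf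
  obtain ⟨y, hy, hxy⟩ := hV.exists_connectedComponentIn_ne x
  obtain ⟨O, H₁, H₂, hqO, hO, hH₁, hH₂⟩ := h.exists_isTwoSidedNhd_self hplane hs hqB
  have hρ : 0 < ρ / 2 := half_pos h.radius_pos
  have hlt : |ρ / 2| < ρ := by rw [abs_of_pos hρ]; exact half_lt_self h.radius_pos
  obtain ⟨D₁, hD₁, hφ₁⟩ :=
    h.exists_unstable_branch (b := ρ / 2) hf hs hu hq hzη hρ.ne' hlt
  obtain ⟨D₂, hD₂, hφ₂⟩ := h.exists_unstable_branch (b := -(ρ / 2)) hf hs hu hq hzη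
    (neg_ne_zero.2 hρ.ne') (by rwa [norm_neg])
  have tendsto_smul : ∀ c : ℝ, Tendsto (fun s : ℝ ↦ s • c) (𝓝[>] 0) (𝓝 0) := fun c ↦
    ((continuous_id.smul continuous_const).tendsto' 0 0 (zero_smul ℝ c)).mono_left
      nhdsWithin_le_nhds
  have hpos : Tendsto (fun s : ℝ ↦ s • (ρ / 2)) (𝓝[>] 0) (𝓝[>] 0) :=
    tendsto_nhdsWithin_iff.2 ⟨tendsto_smul _,
      eventually_mem_nhdsWithin.mono fun _ hs ↦ mul_pos hs hρ⟩
  have hneg : Tendsto (fun s : ℝ ↦ s • -(ρ / 2)) (𝓝[>] 0) (𝓝[<] 0) :=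
    tendsto_nhdsWithin_iff.2 ⟨tendsto_smul _,
      eventually_mem_nhdsWithin.mono fun _ hs ↦ mul_neg_of_pos_of_neg hs (neg_lt_zero.2 hρ)⟩
  obtain ⟨s₁, hs₁D, hs₁H⟩ := (hφ₁.and (hpos.eventually hH₁)).exists
  obtain ⟨s₂, hs₂D, hs₂H⟩ := (hφ₂.and (hneg.eventually hH₂)).exists
  rcases hO.separated hB SpSet_subset_ball isPreconnected_connectedComponentIn
    (isOpen_ball_diff_SpSet hf hs) (fun w ↦ h.exists_isTwoSidedNhd hplane hs) hx hy hxy hqO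
    (mem_SpSet_self hqB) with ⟨hout, hin⟩ | ⟨hout, hin⟩
  · exact hD₂.exists_isPreconnected_crossing hD₁ ⟨_, hs₂D, hin hs₂H⟩
      ⟨_, hs₁D, disjoint_left.1 hout hs₁H⟩ hqB hq
  · exact hD₁.exists_isPreconnected_crossing hD₂ ⟨_, hs₁D, hin hs₁H⟩
      ⟨_, hs₂D, disjoint_left.1 hout hs₂H⟩ hqB hq

end UnstableBranches

section SeparatingChains

/-- The union of the sets `Ŝ_q` over `q ∈ C`; for `C = [p]` its closure is `S_{[p]}`. -/
def chainUnion (f : M ≃ₜ M) (x : M) (ν : ℝ) (C : Set M) : Set M := ⋃ q ∈ C, ShatSet f x ν q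

/-- A family of separating points whose sets `Ŝ_q` are nested and which accumulates at the centre
`x`, where no plaque `S_q` passes through `x` itself. -/
structure IsSeparatingChain (f : M ≃ₜ M) (α : ℝ) (n : ℕ) (x : M) (ν : ℝ) (C : Set M) : Prop where
  isSeparatingPoint : ∀ q ∈ C, IsSeparatingPoint f α n x ν q
  total : ∀ p ∈ C, ∀ q ∈ C,
    ShatSet f x ν p ⊆ ShatSet f x ν q ∨ ShatSet f x ν q ⊆ ShatSet f x ν p
  mem_closure : x ∈ closure C
  notMem_SpSet : ∀ q ∈ C, x ∉ SpSet f x ν q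

variable {f : M ≃ₜ M} {α ν η : ℝ} {n : ℕ} {x t q r w y z : M} {A C : Set M}

lemma ShatSet_subset_chainUnion (hq : q ∈ C) : ShatSet f x ν q ⊆ chainUnion f x ν C :=
  subset_biUnion_of_mem (u := ShatSet f x ν) hq

lemma SpSet_subset_ShatSet : SpSet f x ν q ⊆ ShatSet f x ν q := subset_filling SpSet_subset_ball

lemma notMem_SpSet_of_mem_frontier (hz : z ∈ frontier (closure (chainUnion f x ν C)))
    (hzB : z ∈ ball x ν) (hq : q ∈ C) : x ∉ SpSet f x ν q := fun hx ↦ by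
  have hball : ball x ν ⊆ closure (chainUnion f x ν C) := by
    rw [← filling_eq_of_mem (B := ball x ν) hx]
    exact (ShatSet_subset_chainUnion hq).trans subset_closure
  exact hz.2 (interior_maximal hball isOpen_ball hzB)

namespace IsSeparatingPoint

lemma mem_ShatSet (h : IsSeparatingPoint f α n x ν q) : q ∈ ShatSet f x ν q :=
  SpSet_subset_ShatSet (mem_SpSet_self h.mem_ball)

lemma isOpen_diff [CompactSpace M] (h : IsSeparatingPoint f α n x ν q) (hf : IsExpansive f α) :
    IsOpen (ball x ν \ SpSet f x ν q) := isOpen_ball_diff_SpSet hf h.stable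

end IsSeparatingPoint

namespace IsSeparatingChain

lemma nonempty (h : IsSeparatingChain f α n x ν C) : C.Nonempty :=
  closure_nonempty_iff.1 ⟨x, h.mem_closure⟩

lemma center_mem_diff (h : IsSeparatingChain f α n x ν C) (hq : q ∈ C) :
    x ∈ ball x ν \ SpSet f x ν q :=
  ⟨mem_ball_self (nonempty_ball.1 ⟨q, (h.isSeparatingPoint q hq).mem_ball⟩), h.notMem_SpSet q hq⟩

variable [CompactSpace M] [LocallyConnectedSpace M]

lemma eventually_ShatSet_subset (h : IsSeparatingChain f α n x ν C) (hf : IsExpansive f α)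
    (ht : t ∈ C) (hyB : y ∈ ball x ν) (hy : y ∉ ShatSet f x ν t) :
    ∀ᶠ q in 𝓝 y, q ∈ C → ShatSet f x ν t ⊆ ShatSet f x ν q := by
  filter_upwards [eventually_notMem_filling ((h.isSeparatingPoint t ht).isOpen_diff hf) hyB hy]
    with q hqt hq
  exact (h.total t ht q hq).resolve_right fun hsub ↦
    hqt (hsub (h.isSeparatingPoint q hq).mem_ShatSet)

lemma exists_disjoint_SpSet (h : IsSeparatingChain f α n x ν C) (hf : IsExpansive f α)
    (ht : t ∈ C) (hA : A ∈ 𝓝 x) :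
    ∃ q ∈ C ∩ A, ShatSet f x ν t ⊆ ShatSet f x ν q ∧
      Disjoint (ShatSet f x ν t) (SpSet f x ν q) := by
  have hx := h.center_mem_diff ht
  have hxt : x ∉ ShatSet f x ν t := notMem_filling_self hx
  have hnotMem : ∀ᶠ q in 𝓝 x, q ∉ ShatSet f x ν t :=
    eventually_notMem_filling ((h.isSeparatingPoint t ht).isOpen_diff hf) hx.1 hxt
  obtain ⟨q, hqC, hsub, hqt, hqA⟩ := ((mem_closure_iff_frequently.1 h.mem_closure).and_eventually
    ((h.eventually_ShatSet_subset hf ht hx.1 hxt).and (hnotMem.and hA))).exists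
  have hqS := mem_SpSet_self (f := f) (h.isSeparatingPoint q hqC).mem_ball
  refine ⟨q, ⟨hqC, hqA⟩, hsub hqC, disjoint_filling_of_mem isPreconnected_connectedComponentIn
    (fun u hu ↦ ⟨SpSet_subset_ball hu, fun hut ↦ hqt ?_⟩) hqS hqt⟩
  exact SpSet_subset_ShatSet (SpSet_eq_of_mem_of_mem hu hut ▸ hqS)

lemma isPreconnected_ball (h : IsSeparatingChain f α n x ν C) (hf : IsExpansive f α) :
    IsPreconnected (ball x ν) := by
  by_contra hB
  have hK : connectedComponentIn (ball x ν) x ∈ 𝓝 x := by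
    obtain ⟨t, ht⟩ := h.nonempty
    have hx := (h.center_mem_diff ht).1
    exact isOpen_ball.connectedComponentIn.mem_nhds (mem_connectedComponentIn hx)
  obtain ⟨t, htK, ht⟩ := mem_closure_iff_nhds.1 h.mem_closure _ hK
  obtain ⟨q, ⟨hq, hqK⟩, hsub, hdisj⟩ := h.exists_disjoint_SpSet hf ht hK
  have hqsep := h.isSeparatingPoint q hq
  obtain ⟨V₁, V₂, hV⟩ := hqsep.twoComponents
  have hSK : SpSet f x ν q ⊆ connectedComponentIn (ball x ν) x :=
    subset_connectedComponentIn_of_mem isPreconnected_connectedComponentIn SpSet_subset_ball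
      (mem_SpSet_self hqsep.mem_ball) hqK
  have htt := (h.isSeparatingPoint t ht).mem_ShatSet
  exact disjoint_left.1 hdisj htt <| connectedComponentIn_inter_filling_subset hV
    (h.center_mem_diff hq) hSK hB ⟨htK, hsub htt⟩

lemma exists_ShatSet_subset_interior (h : IsSeparatingChain f α n x ν C) (hf : IsExpansive f α)
    (ht : t ∈ C) : ∃ q ∈ C, ShatSet f x ν t ⊆ interior (ShatSet f x ν q) := by
  obtain ⟨q, ⟨hq, -⟩, hsub, hdisj⟩ := h.exists_disjoint_SpSet hf ht univ_mem
  exact ⟨q, hq, fun u hu ↦ filling_diff_subset_interior ((h.isSeparatingPoint q hq).isOpen_diff hf)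
    ⟨hsub hu, disjoint_left.1 hdisj hu⟩⟩

lemma chainUnion_eq_biUnion_interior (h : IsSeparatingChain f α n x ν C) (hf : IsExpansive f α) :
    chainUnion f x ν C = ⋃ q ∈ C, interior (ShatSet f x ν q) := by
  refine Subset.antisymm (iUnion₂_subset fun t ht ↦ ?_) (iUnion₂_mono fun _ _ ↦ interior_subset)
  obtain ⟨q, hq, hsub⟩ := h.exists_ShatSet_subset_interior hf ht
  exact hsub.trans (subset_biUnion_of_mem (u := fun q ↦ interior (ShatSet f x ν q)) hq)

lemma notMem_chainUnion_of_mem_frontier (h : IsSeparatingChain f α n x ν C)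
    (hf : IsExpansive f α) (hz : z ∈ frontier (closure (chainUnion f x ν C))) :
    z ∉ chainUnion f x ν C := fun hzO ↦ by
  have hopen : IsOpen (chainUnion f x ν C) := by
    rw [h.chainUnion_eq_biUnion_interior hf]
    exact isOpen_biUnion fun _ _ ↦ isOpen_interior
  exact hz.2 (interior_maximal subset_closure hopen hzO)

lemma mem_WsLoc_of_mem_closure (h : IsSeparatingChain f α n x ν C) (hf : IsExpansive f α)
    (hzC : z ∈ closure C) (hzB : z ∈ ball x ν) (hzO : z ∉ chainUnion f x ν C)
    (hw : w ∈ closure (chainUnion f x ν C)) (hwB : w ∈ ball x ν)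
    (hwO : w ∉ chainUnion f x ν C) : w ∈ WsLoc f α z := by
  suffices (z, w) ∈ closure {p : M × M | p.2 ∈ WsLoc f α p.1} from
    (isClosed_setOf_mem_WsLoc f α).closure_subset this
  refine mem_closure_iff_nhds.2 fun T hT ↦ ?_
  obtain ⟨A, hA, W, hW, hAW⟩ := mem_nhds_prod_iff.1 hT
  obtain ⟨N, hNsub, hN, hwN, hNconn⟩ := locallyConnectedSpace_iff_subsets_isOpen_isConnected.1
    ‹_› w (W ∩ ball x ν) (inter_mem hW (isOpen_ball.mem_nhds hwB))
  obtain ⟨u, huN, huO⟩ := mem_closure_iff.1 hw N hN hwN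
  obtain ⟨t, ht, hut⟩ := mem_iUnion₂.1 huO
  have hzt : z ∉ ShatSet f x ν t := fun hzt ↦ hzO (ShatSet_subset_chainUnion ht hzt)
  obtain ⟨q, hq, hsub, hqA⟩ := ((mem_closure_iff_frequently.1 hzC).and_eventually
    ((h.eventually_ShatSet_subset hf ht hzB hzt).and hA)).exists
  obtain ⟨s, hsN, hsq⟩ := inter_nonempty_of_filling hNconn.isPreconnected
    (hNsub.trans inter_subset_right) ⟨u, huN, hsub hq hut⟩
    ⟨w, hwN, fun hwq ↦ hwO (ShatSet_subset_chainUnion hq hwq)⟩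
  exact ⟨(q, s), hAW ⟨hqA, (hNsub hsN).1⟩, (h.isSeparatingPoint q hq).stable hsq⟩

lemma sphere_inter_closure_inter_WuLoc_subset (h : IsSeparatingChain f α n x ν C)
    (hf : IsExpansive f α) (hzC : z ∈ closure C) (hzB : z ∈ ball x ν)
    (hzO : z ∉ chainUnion f x ν C) (hη : 0 < η) (hzη : closedBall z η ⊆ ball x ν) :
    sphere z η ∩ closure (chainUnion f x ν C) ∩ WuLoc f α z ⊆ chainUnion f x ν C := by
  rintro w ⟨⟨hwη, hw⟩, hwu⟩
  by_contra hwO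
  have hws := h.mem_WsLoc_of_mem_closure hf hzC hzB hzO hw (hzη (sphere_subset_closedBall hwη)) hwO
  rw [hf.eq_of_mem_WsLoc_of_mem_WuLoc hws hwu, mem_sphere, dist_self] at hwη
  exact hη.ne hwη

lemma exists_subset_interior_ShatSet_of_isCompact (h : IsSeparatingChain f α n x ν C)
    (hf : IsExpansive f α) {K : Set M} (hK : IsCompact K) (hKC : K ⊆ chainUnion f x ν C) :
    ∃ t ∈ C, K ⊆ interior (ShatSet f x ν t) := by
  have : Nonempty C := h.nonempty.to_subtype
  rw [h.chainUnion_eq_biUnion_interior hf, biUnion_eq_iUnion] at hKC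
  obtain ⟨⟨t, ht⟩, hsub⟩ := hK.elim_directed_cover _ (fun _ ↦ isOpen_interior) hKC
    fun p q ↦ (h.total p p.2 q q.2).elim
      (fun hpq ↦ ⟨q, interior_mono hpq, Subset.rfl⟩) fun hqp ↦ ⟨p, Subset.rfl, interior_mono hqp⟩
  exact ⟨t, ht, hsub⟩

lemma exists_eventually_UpSet_inter_sphere_subset (h : IsSeparatingChain f α n x ν C)
    (hf : IsExpansive f α) (hzC : z ∈ closure C) (hzB : z ∈ ball x ν)
    (hzO : z ∉ chainUnion f x ν C) (hη : 0 < η) (hzη : closedBall z η ⊆ ball x ν) :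
    ∃ t ∈ C, ∀ᶠ q in 𝓝 z, q ∈ C →
      UpSet f x ν q ∩ (sphere z η ∩ closure (chainUnion f x ν C)) ⊆ ShatSet f x ν t := by
  set K := sphere z η ∩ closure (chainUnion f x ν C)
  have hK : IsCompact K := (isClosed_sphere.inter isClosed_closure).isCompact
  have hclosed := isClosed_setOf_mem_WuLoc f α
  obtain ⟨t, ht, hsub⟩ := h.exists_subset_interior_ShatSet_of_isCompact hf
    (hK.inter_right (hclosed.preimage (Continuous.prodMk_right z)))
    (h.sphere_inter_closure_inter_WuLoc_subset hf hzC hzB hzO hη hzη)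
  refine ⟨t, ht, ?_⟩
  have hnear : ∀ᶠ q in 𝓝 z, ∀ w ∈ K, w ∈ WuLoc f α q → w ∈ interior (ShatSet f x ν t) := by
    refine hK.eventually_forall_of_forall_eventually fun w hw ↦ ?_
    by_cases hwu : w ∈ WuLoc f α z
    · filter_upwards [continuousAt_snd.eventually_mem
        (isOpen_interior.mem_nhds (hsub ⟨hw, hwu⟩))] with p hp _ using hp
    · filter_upwards [hclosed.isOpen_compl.mem_nhds hwu] with p hp hpu using absurd hpu hp
  filter_upwards [hnear] with q hq hqC
  exact fun w hw ↦ interior_subset (hq w hw.2 ((h.isSeparatingPoint q hqC).unstable hw.1))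

lemma exists_isOpen_forall_UpSet_inter_sphere_subset (h : IsSeparatingChain f α n x ν C)
    (hf : IsExpansive f α) (hzB : z ∈ ball x ν) (hzO : z ∉ chainUnion f x ν C) (hη : 0 < η)
    (hzη : closedBall z η ⊆ ball x ν) :
    ∃ V, IsOpen V ∧ z ∈ V ∧ ∀ q ∈ V ∩ C, ∀ r ∈ V ∩ C,
      UpSet f x ν q ∩ (sphere z η ∩ closure (chainUnion f x ν C)) ⊆ ShatSet f x ν r := by
  by_cases hzC : z ∈ closure C
  · obtain ⟨t, ht, hUp⟩ := h.exists_eventually_UpSet_inter_sphere_subset hf hzC hzB hzO hη hzη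
    have hsub := h.eventually_ShatSet_subset hf ht hzB fun hzt ↦
      hzO (ShatSet_subset_chainUnion ht hzt)
    obtain ⟨V, hV, hVo, hzV⟩ := _root_.eventually_nhds_iff.1 (hUp.and hsub)
    exact ⟨V, hVo, hzV, fun q hq r hr ↦ ((hV q hq.1).1 hq.2).trans ((hV r hr.1).2 hr.2)⟩
  · exact ⟨(closure C)ᶜ, isClosed_closure.isOpen_compl, hzC, fun q hq ↦
      absurd (subset_closure hq.2) hq.1⟩

lemma exists_isPreconnected_crossing (h : IsSeparatingChain f α n x ν C) (hf : IsExpansive f α)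
    (hq : q ∈ C) (hqη : q ∈ ball z η) (hzη : closedBall z η ⊆ ball x ν)
    (hself : UpSet f x ν q ∩ (sphere z η ∩ closure (chainUnion f x ν C)) ⊆ ShatSet f x ν q) :
    ∃ Y, IsPreconnected Y ∧ Y ⊆ UpSet f x ν q ∩ closedBall z η ∧
      (Y ∩ sphere z η ∩ closure (chainUnion f x ν C)).Nonempty ∧
      (Y \ closure (chainUnion f x ν C)).Nonempty := by
  obtain ⟨Y, hY, hYU, ⟨a, ⟨haY, haη⟩, haq⟩, ⟨b, ⟨hbY, hbη⟩, hbq⟩⟩ :=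
    (h.isSeparatingPoint q hq).exists_isPreconnected_crossing hf (h.isPreconnected_ball hf)
      (h.center_mem_diff hq) hqη hzη
  exact ⟨Y, hY, hYU, ⟨a, ⟨haY, haη⟩, subset_closure (ShatSet_subset_chainUnion hq haq)⟩,
    ⟨b, hbY, fun hb ↦ hbq (hself ⟨(hYU hbY).1, hbη, hb⟩)⟩⟩

lemma inter_nonempty_of_UpSet_inter_sphere_subset (h : IsSeparatingChain f α n x ν C)
    (hf : IsExpansive f α) (hq : q ∈ C) (hqη : q ∈ ball z η) (hzη : closedBall z η ⊆ ball x ν)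
    (hself : UpSet f x ν q ∩ (sphere z η ∩ closure (chainUnion f x ν C)) ⊆ ShatSet f x ν q)
    (hr : r ∈ C)
    (hsub : UpSet f x ν q ∩ (sphere z η ∩ closure (chainUnion f x ν C)) ⊆ ShatSet f x ν r) :
    (UpSet f x ν q ∩ SpSet f x ν r ∩ closedBall z η ∩ closure (chainUnion f x ν C)).Nonempty ∧
      (UpSet f x ν q ∩ frontier (closure (chainUnion f x ν C)) ∩ closedBall z η).Nonempty := by
  obtain ⟨Y, hY, hYU, ⟨a, ⟨haY, haη⟩, ha⟩, ⟨b, hbY, hb⟩⟩ :=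
    h.exists_isPreconnected_crossing hf hq hqη hzη hself
  have hr' : ShatSet f x ν r ⊆ closure (chainUnion f x ν C) :=
    (ShatSet_subset_chainUnion hr).trans subset_closure
  obtain ⟨u, huY, huS⟩ := inter_nonempty_of_filling hY ((hYU.trans inter_subset_right).trans hzη)
    ⟨a, haY, hsub ⟨(hYU haY).1, haη, ha⟩⟩ ⟨b, hbY, fun hbr ↦ hb (hr' hbr)⟩
  obtain ⟨v, hvY, hv⟩ := inter_frontier_nonempty_of_isPreconnected hY ⟨a, haY, ha⟩ ⟨b, hbY, hb⟩
  exact ⟨⟨u, ⟨⟨(hYU huY).1, huS⟩, (hYU huY).2⟩, hr' (SpSet_subset_ShatSet huS)⟩,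
    ⟨v, ⟨(hYU hvY).1, hv⟩, (hYU hvY).2⟩⟩

end IsSeparatingChain

lemma IsChainIn.mono {f : M ≃ₜ M} {n : ℕ} {x : M} {ν δ₁ δ₂ : ℝ} {C : Set M}
    (h : IsChainIn f n x ν δ₁ C) (hδ : δ₁ ≤ δ₂) : IsChainIn f n x ν δ₂ C :=
  ⟨h.1.trans (inter_subset_inter_right _ (ball_subset_ball hδ)), h.2⟩

lemma PerHr_subset_PerH {f : M ≃ₜ M} {n r : ℕ} (hr : r ≤ n) : PerHr f n r ⊆ PerH f n :=
  fun _ hp ↦ mem_iUnion₂.2 ⟨r, Finset.mem_range.2 (Nat.lt_succ_of_le hr), hp⟩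

end SeparatingChains

theorem stmt16_general {M : Type*} [MetricSpace M] [CompactSpace M] [LocallyConnectedSpace M]
    {f : M ≃ₜ M} {α : ℝ} (hexp : IsExpansive f α) {n : ℕ} {x : M} {ν : ℝ} {C : Set M}
    (hC : IsChainIn f n x ν ν C)
    (hs : ∀ q ∈ C, SpSet f x ν q ⊆ WsLoc f α q) (hu : ∀ q ∈ C, UpSet f x ν q ⊆ WuLoc f α q)
    (htwo : ∀ q ∈ C, ∃ V₁ V₂, TwoComponents (ball x ν \ SpSet f x ν q) V₁ V₂)
    (hacc : x ∈ closure C) {z : M}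
    (hz : z ∈ frontier (closure (⋃ q ∈ C, ShatSet f x ν q)) ∩ ball x ν) {ε : ℝ} (hε : 0 < ε) :
    ∃ V, IsOpen V ∧ z ∈ V ∧ ∀ q ∈ V ∩ C, ∀ r ∈ V ∩ C,
      (UpSet f x ν q ∩ SpSet f x ν r ∩ ball z ε ∩
        closure (⋃ q' ∈ C, ShatSet f x ν q')).Nonempty ∧
      (UpSet f x ν q ∩ frontier (closure (⋃ q' ∈ C, ShatSet f x ν q')) ∩ ball z ε).Nonempty := by
  obtain ⟨hz, hzB⟩ := hz
  have hsep : ∀ q ∈ C, IsSeparatingPoint f α n x ν q := fun q hq ↦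
    ⟨(hC.1 hq).1, (hC.1 hq).2, hs q hq, hu q hq, htwo q hq⟩
  have h : IsSeparatingChain f α n x ν C := ⟨hsep, hC.2, hacc, fun q hq ↦
    notMem_SpSet_of_mem_frontier hz hzB hq⟩
  obtain ⟨η, hη, hηsub⟩ := nhds_basis_closedBall.mem_iff.1
    (inter_mem (isOpen_ball.mem_nhds hzB) (ball_mem_nhds z hε))
  obtain ⟨hzη, hηε⟩ := subset_inter_iff.1 hηsub
  obtain ⟨V, hV, hzV, hVsub⟩ := h.exists_isOpen_forall_UpSet_inter_sphere_subset hexp hzB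
    (h.notMem_chainUnion_of_mem_frontier hexp hz) hη hzη
  refine ⟨V ∩ ball z η, hV.inter isOpen_ball, ⟨hzV, mem_ball_self hη⟩, fun q hq r hr ↦ ?_⟩
  have hqV : q ∈ V ∩ C := ⟨hq.1.1, hq.2⟩
  obtain ⟨⟨u, ⟨hu, huη⟩, huC⟩, ⟨v, hv, hvη⟩⟩ := h.inter_nonempty_of_UpSet_inter_sphere_subset hexp
    hq.2 hq.1.2 hzη (hVsub q hqV q hqV) hr.2 (hVsub q hqV r ⟨hr.1.1, hr.2⟩)
  exact ⟨⟨u, ⟨hu, hηε huη⟩, huC⟩, ⟨v, hv, hηε hvη⟩⟩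

/-- **Lemma (intersections near the frontier).** -/
theorem stmt16
    {M : Type*} [MetricSpace M] [CompactSpace M] [ConnectedSpace M]
    (n : ℕ) [ChartedSpace (EuclideanSpace ℝ (Fin n)) M]
    (f : M ≃ₜ M) (α : ℝ) (hα : 0 < α) (hexp : IsExpansive f α)
    (x : M) (hx : ¬ AdmitsLPS f n x)
    (ε : ℝ) (hε : 0 < ε) (hεα : 2 * ε < α) (ν : ℝ) (hν : 0 < ν)
    (hi : ∀ p ∈ PerH f n ∩ Metric.ball x ν,
      SpSet f x ν p ⊆ WsLoc f ε p ∧ UpSet f x ν p ⊆ WuLoc f ε p)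
    (hii : ∀ p ∈ PerHr f n (n - 1) ∩ Metric.ball x ν,
      ∃ V₁ V₂ : Set M, TwoComponents (Metric.ball x ν \ SpSet f x ν p) V₁ V₂)
    (hdense : closure (PerH f n) = Set.univ)
    (δ : ℝ) (hδ : δ ∈ Set.Ioo (0 : ℝ) ν)
    (hfin : {C : Set M | IsMaxChainIn f n x ν δ C}.Finite)
    (hdisj : ∀ C₁ C₂ : Set M, IsMaxChainIn f n x ν δ C₁ → IsMaxChainIn f n x ν δ C₂ →
      C₁ ≠ C₂ → Disjoint C₁ C₂)
    (hacc : ∀ C : Set M, IsMaxChainIn f n x ν δ C → x ∈ closure C)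
    :
    ∀ p ∈ Xdelta f n x δ, ∀ C : Set M, IsMaxChainIn f n x ν δ C → p ∈ C →
      ∀ z ∈ frontier (closure (⋃ q ∈ C, ShatSet f x ν q)) ∩ Metric.ball x δ,
        ∀ ε' : ℝ, 0 < ε' →
          ∃ V : Set M, IsOpen V ∧ z ∈ V ∧
            ∀ q ∈ V ∩ C, ∀ r ∈ V ∩ C,
              (UpSet f x ν q ∩ SpSet f x ν r ∩ Metric.ball z ε' ∩
                closure (⋃ q' ∈ C, ShatSet f x ν q')).Nonempty ∧
              (UpSet f x ν q ∩
                frontier (closure (⋃ q' ∈ C, ShatSet f x ν q')) ∩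
                Metric.ball z ε').Nonempty := by
  have : LocallyConnectedSpace M := ChartedSpace.locallyConnectedSpace (EuclideanSpace ℝ (Fin n)) M
  rintro - - C hC - z ⟨hz, hzδ⟩ ε' hε'
  have hchain : IsChainIn f n x ν ν C := hC.1.mono hδ.2.le
  have hloc := fun q (hq : q ∈ C) ↦
    hi q ⟨PerHr_subset_PerH (Nat.sub_le n 1) (hchain.1 hq).1, (hchain.1 hq).2⟩
  have hεα' : ε ≤ α := by linarith
  exact stmt16_general hexp hchain (fun q hq ↦ (hloc q hq).1.trans (WsLoc_mono f hεα' q))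
    (fun q hq ↦ (hloc q hq).2.trans (WuLoc_mono f hεα' q)) (fun q hq ↦ hii q (hchain.1 hq))
    (hacc C hC) ⟨hz, ball_subset_ball hδ.2.le hzδ⟩ hε'
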